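/- arXiv:1011.1044 — 14 statements merged into one kernel-verified Lean document; each statement's English description precedes it below -/
import Mathlib

section
/- Let A = {A_0,…,A_d} be an association scheme on a finite vertex set V and let n ≥ 1. Then the matrices A_α of H(n,A), as α ranges over all vectors of d+1 nonnegative integers summing to n, form an association scheme on the vertex set V^n: A_{(n,0,…,0)} is the identity matrix; the sum of all A_α is the all-ones matrix; the transpose of each A_α is again some A_{α'}; any product A_α·A_{α'} is a linear combination of the matrices A_{α''}; and any two of the matrices A_α commute. -/
open Matrix Finset MvPolynomial

/-- An association scheme with `d` classes on the finite vertex set `V`. -/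
structure AssocScheme (d : ℕ) (V : Type) [Fintype V] [DecidableEq V] : Type where
  A : Fin (d + 1) → Matrix V V ℂ
  entries_zero_or_one : ∀ i x y, A i x y = 0 ∨ A i x y = 1
  A_zero : A 0 = 1
  A_sum : ∑ i, A i = Matrix.of fun _ _ => 1
  transpose_mem : ∀ i, ∃ j, (A i)ᵀ = A j
  mul_eq_lin_comb : ∀ i j, ∃ p : Fin (d + 1) → ℂ, A i * A j = ∑ k, p k • A k
  mul_comm' : ∀ i j, A i * A j = A j * A i

open Classical in
/-- `h(x,y)`: the vector whose `r`-th entry counts coordinates `j` with `(A_r)_{x_j,y_j} = 1`. -/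
noncomputable def AssocScheme.profile {d : ℕ} {V : Type} [Fintype V] [DecidableEq V]
    (S : AssocScheme d V) (n : ℕ) (x y : Fin n → V) : Fin (d + 1) → ℕ :=
  fun r => (Finset.univ.filter fun j : Fin n => S.A r (x j) (y j) = 1).card

open Classical in
/-- The matrix `A_α` of the generalized Hamming scheme `H(n,A)`. -/
noncomputable def AssocScheme.ham {d : ℕ} {V : Type} [Fintype V] [DecidableEq V]
    (S : AssocScheme d V) (n : ℕ) (α : Fin (d + 1) → ℕ) :
    Matrix (Fin n → V) (Fin n → V) ℂ :=
  Matrix.of fun x y => if S.profile n x y = α then 1 else 0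

theorem gh_fiber {X K : Type} [Fintype X] [DecidableEq K] (f g : X → K)
    (h : ∀ k, (Finset.univ.filter fun x => f x = k).card
      = (Finset.univ.filter fun x => g x = k).card) :
    ∃ e : X ≃ X, ∀ x, g (e x) = f x := by
  have h2 : ∀ k, Nonempty ({x // f x = k} ≃ {x // g x = k}) := by
    intro k
    apply Fintype.card_eq.mp
    rw [Fintype.card_subtype, Fintype.card_subtype]
    exact h k
  exact ⟨Equiv.ofFiberEquiv fun k => (h2 k).some, fun x => Equiv.ofFiberEquiv_map _ x⟩

theorem gh_class {V : Type} [Fintype V] [DecidableEq V] {d : ℕ} (S : AssocScheme d V) :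
    ∃ c : V → V → Fin (d + 1), ∀ r x y, S.A r x y = if c x y = r then 1 else 0 := by
  have key : ∀ x y, ∃ i, ∀ r, S.A r x y = if i = r then 1 else 0 := by
    intro x y
    have hs : ∑ i, S.A i x y = 1 := by
      have := congrFun (congrFun S.A_sum x) y
      simpa [Matrix.sum_apply] using this
    have hs2 : (Finset.univ.filter fun i => S.A i x y = 1).card = 1 := by
      have h3 : ∀ i, S.A i x y = if S.A i x y = 1 then 1 else 0 := by
        intro i
        rcases S.entries_zero_or_one i x y with h | h <;> simp [h]
      rw [Finset.sum_congr rfl (fun i _ => h3 i), Finset.sum_boole] at hs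
      exact_mod_cast hs
    obtain ⟨i, hi⟩ := Finset.card_eq_one.mp hs2
    refine ⟨i, fun r => ?_⟩
    have hr : S.A r x y = 1 ↔ r = i := by
      have := Finset.ext_iff.mp hi r
      simpa using this
    split_ifs with h
    · exact hr.mpr h.symm
    · rcases S.entries_zero_or_one r x y with h' | h'
      · exact h'
      · exact absurd (hr.mp h').symm h
  choose c hc using key
  exact ⟨c, fun r x y => hc x y r⟩

section gh
variable {V : Type} [Fintype V] [DecidableEq V] {d : ℕ} (S : AssocScheme d V)
  (c : V → V → Fin (d + 1)) (hc : ∀ r x y, S.A r x y = if c x y = r then 1 else 0)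

include hc

theorem gh_profile (n : ℕ) (x y : Fin n → V) (r : Fin (d + 1)) :
    S.profile n x y r = (Finset.univ.filter fun j => c (x j) (y j) = r).card := by
  unfold AssocScheme.profile
  congr 1
  ext j
  simp [hc]

theorem gh_profile_congr (n : ℕ) (x y x' y' : Fin n → V) (π : Fin n ≃ Fin n)
    (h : ∀ j, c (x' j) (y' j) = c (x (π j)) (y (π j))) :
    S.profile n x' y' = S.profile n x y := by
  funext r
  rw [gh_profile S c hc, gh_profile S c hc]
  apply Finset.card_equiv π
  intro j
  simp [h]

theorem gh_profile_sum (n : ℕ) (x y : Fin n → V) : ∑ r, S.profile n x y r = n := by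
  simp_rw [gh_profile S c hc]
  rw [← Finset.card_eq_sum_card_fiberwise (fun _ _ => by simp)]
  simp

theorem gh_count (i j : Fin (d + 1)) (a b : V) :
    (S.A i * S.A j) a b
      = ((Finset.univ.filter fun v => (c a v, c v b) = (i, j)).card : ℂ) := by
  rw [Matrix.mul_apply, ← Finset.sum_boole]
  refine Finset.sum_congr rfl fun v _ => ?_
  rw [hc, hc]
  by_cases h1 : c a v = i <;> by_cases h2 : c v b = j <;> simp [h1, h2]

theorem gh_local (a b a' b' : V) (h : c a b = c a' b') :
    ∃ e : V ≃ V, ∀ v, c a' (e v) = c a v ∧ c (e v) b' = c v b := by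
  obtain ⟨e, he⟩ := gh_fiber (fun v => (c a v, c v b)) (fun v => (c a' v, c v b')) (by
    rintro ⟨i, j⟩
    have : (S.A i * S.A j) a b = (S.A i * S.A j) a' b' := by
      obtain ⟨p, hp⟩ := S.mul_eq_lin_comb i j
      rw [hp]
      simp [Matrix.sum_apply, hc, h]
    rw [gh_count S c hc, gh_count S c hc] at this
    exact_mod_cast this)
  exact ⟨e, fun v => by simpa using he v⟩

theorem gh_local_comm (a b : V) :
    ∃ e : V ≃ V, ∀ v, c a (e v) = c v b ∧ c (e v) b = c a v := by
  obtain ⟨e, he⟩ := gh_fiber (fun v => (c v b, c a v)) (fun v => (c a v, c v b)) (by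
    rintro ⟨i, j⟩
    have : (S.A j * S.A i) a b = (S.A i * S.A j) a b := by
      rw [S.mul_comm']
    rw [gh_count S c hc, gh_count S c hc] at this
    have h2 : (Finset.univ.filter fun v => (c v b, c a v) = (i, j))
        = (Finset.univ.filter fun v => (c a v, c v b) = (j, i)) := by
      ext v
      simp [and_comm]
    rw [h2]
    exact_mod_cast this)
  exact ⟨e, fun v => by simpa using he v⟩

theorem gh_mul_congr (n : ℕ) (α β : Fin (d + 1) → ℕ) (x y x' y' : Fin n → V)
    (h : S.profile n x y = S.profile n x' y') :
    (S.ham n α * S.ham n β) x y = (S.ham n α * S.ham n β) x' y' := by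
  obtain ⟨π, hπ⟩ := gh_fiber (fun j => c (x' j) (y' j)) (fun j => c (x j) (y j)) (by
    intro k
    rw [← gh_profile S c hc, ← gh_profile S c hc, h])
  choose e he using fun j => gh_local S c hc (x (π j)) (y (π j)) (x' j) (y' j) (hπ j)
  rw [Matrix.mul_apply, Matrix.mul_apply]
  refine Fintype.sum_equiv ((Equiv.arrowCongr π.symm (Equiv.refl V)).trans
    (Equiv.piCongrRight e)) _ _ fun z => ?_
  have e1 := gh_profile_congr S c hc n x z x' (fun j => e j (z (π j))) π
    (fun j => (he j _).1)
  have e2 := gh_profile_congr S c hc n z y (fun j => e j (z (π j))) y' π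
    (fun j => (he j _).2)
  have e3 : ((Equiv.arrowCongr π.symm (Equiv.refl V)).trans (Equiv.piCongrRight e)) z
      = fun j => e j (z (π j)) := by
    funext j
    simp [Equiv.arrowCongr, Equiv.piCongrRight]
  rw [e3]
  simp only [AssocScheme.ham, Matrix.of_apply, e1, e2]

theorem gh_mul_comm (n : ℕ) (α β : Fin (d + 1) → ℕ) :
    S.ham n α * S.ham n β = S.ham n β * S.ham n α := by
  ext x y
  choose e he using fun j => gh_local_comm S c hc (x j) (y j)
  rw [Matrix.mul_apply, Matrix.mul_apply]
  refine Fintype.sum_equiv (Equiv.piCongrRight e) _ _ fun z => ?_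
  have e1 : S.profile n x (Equiv.piCongrRight e z) = S.profile n z y := by
    funext r
    rw [gh_profile S c hc, gh_profile S c hc]
    simp [he]
  have e2 : S.profile n (Equiv.piCongrRight e z) y = S.profile n x z := by
    funext r
    rw [gh_profile S c hc, gh_profile S c hc]
    simp [he]
  simp only [AssocScheme.ham, Matrix.of_apply, e1, e2]
  ring

theorem gh_sum_ham (n : ℕ) (p : (Fin (d + 1) → ℕ) → ℂ) (x y : Fin n → V) :
    (∑ α ∈ Finset.Nat.antidiagonalTuple (d + 1) n, p α • S.ham n α) x y
      = p (S.profile n x y) := by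
  rw [Matrix.sum_apply, Finset.sum_eq_single (S.profile n x y)]
  · simp [AssocScheme.ham]
  · intro b _ hb
    simp [AssocScheme.ham, hb.symm]
  · intro h
    exact absurd (Finset.Nat.mem_antidiagonalTuple.mpr (gh_profile_sum S c hc n x y)) h

theorem gh_transpose : ∃ σ : Fin (d + 1) → Fin (d + 1), ∀ a b, c b a = σ (c a b) := by
  choose σ hσ using S.transpose_mem
  refine ⟨σ, fun a b => ?_⟩
  have := congrFun (congrFun (hσ (c a b)) b) a
  rw [Matrix.transpose_apply, hc, hc] at this
  by_contra hne
  simp [hne] at this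

theorem gh_profile_transpose (n : ℕ) (x y x' y' : Fin n → V)
    (h : S.profile n x y = S.profile n x' y') : S.profile n y x = S.profile n y' x' := by
  obtain ⟨σ, hσ⟩ := gh_transpose S c hc
  obtain ⟨π, hπ⟩ := gh_fiber (fun j => c (x j) (y j)) (fun j => c (x' j) (y' j)) (by
    intro k
    rw [← gh_profile S c hc, ← gh_profile S c hc, h])
  apply gh_profile_congr S c hc n _ _ _ _ π
  intro j
  rw [hσ, hσ (x' _)]
  exact congrArg σ (hπ j).symm

theorem gh_one (n : ℕ) : S.ham n (fun i => if i = 0 then n else 0) = 1 := by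
  have h0 : ∀ a b, c a b = 0 ↔ a = b := by
    intro a b
    have := hc 0 a b
    rw [S.A_zero, Matrix.one_apply] at this
    by_cases h1 : a = b <;> by_cases h2 : c a b = 0 <;> simp_all
  ext x y
  rw [Matrix.one_apply]
  simp only [AssocScheme.ham, Matrix.of_apply]
  congr 1
  rw [eq_iff_iff]
  constructor
  · intro h
    have := congrFun h 0
    rw [gh_profile S c hc] at this
    simp only [if_true] at this
    have h2 := (Finset.card_eq_iff_eq_univ _).mp (this.trans (Fintype.card_fin n).symm)
    funext j
    have h3 := Finset.mem_univ j
    rw [← h2] at h3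
    exact (h0 _ _).mp (by simpa using h3)
  · rintro rfl
    funext r
    rw [gh_profile S c hc]
    simp only [(h0 _ _).mpr rfl]
    by_cases hr : r = 0
    · simp [hr]
    · simp [hr, Ne.symm hr]

end gh

/-- The matrices `A_α`, as `α` ranges over vectors of `d+1`
nonnegative integers summing to `n`, form an association scheme on `V^n`. -/
theorem generalizedHamming_isAssocScheme {V : Type} [Fintype V] [DecidableEq V]
    {d : ℕ} (S : AssocScheme d V) (n : ℕ) (hn : 1 ≤ n) :
    (S.ham n (fun i => if i = 0 then n else 0) = 1) ∧
    (∑ α ∈ Finset.Nat.antidiagonalTuple (d + 1) n, S.ham n α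
        = Matrix.of fun _ _ => 1) ∧
    (∀ α ∈ Finset.Nat.antidiagonalTuple (d + 1) n,
        ∃ α' ∈ Finset.Nat.antidiagonalTuple (d + 1) n, (S.ham n α)ᵀ = S.ham n α') ∧
    (∀ α ∈ Finset.Nat.antidiagonalTuple (d + 1) n,
      ∀ α' ∈ Finset.Nat.antidiagonalTuple (d + 1) n,
        ∃ p : (Fin (d + 1) → ℕ) → ℂ,
          S.ham n α * S.ham n α'
            = ∑ α'' ∈ Finset.Nat.antidiagonalTuple (d + 1) n, p α'' • S.ham n α'') ∧
    (∀ α α' : Fin (d + 1) → ℕ, S.ham n α * S.ham n α' = S.ham n α' * S.ham n α) := by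
  obtain ⟨c, hc⟩ := gh_class S
  refine ⟨gh_one S c hc n, ?_, ?_, ?_, gh_mul_comm S c hc n⟩
  · ext x y
    have := gh_sum_ham S c hc n (fun _ => 1) x y
    simpa only [one_smul, Matrix.of_apply] using this
  · intro α hα
    by_cases h : ∃ x y, S.profile n x y = α
    · obtain ⟨x, y, rfl⟩ := h
      refine ⟨S.profile n y x,
        Finset.Nat.mem_antidiagonalTuple.mpr (gh_profile_sum S c hc n y x), ?_⟩
      ext u w
      simp only [AssocScheme.ham, Matrix.of_apply, Matrix.transpose_apply]
      have : S.profile n w u = S.profile n x y ↔ S.profile n u w = S.profile n y x :=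
        ⟨gh_profile_transpose S c hc n _ _ _ _, gh_profile_transpose S c hc n _ _ _ _⟩
      simp only [this]
    · push Not at h
      refine ⟨α, hα, ?_⟩
      ext u w
      simp [AssocScheme.ham, h]
  · intro α _ β _
    classical
    refine ⟨fun γ => if h : ∃ q : (Fin n → V) × (Fin n → V), S.profile n q.1 q.2 = γ
      then (S.ham n α * S.ham n β) h.choose.1 h.choose.2 else 0, ?_⟩
    ext x y
    rw [gh_sum_ham S c hc]
    have h : ∃ q : (Fin n → V) × (Fin n → V), S.profile n q.1 q.2 = S.profile n x y :=
      ⟨(x, y), rfl⟩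
    rw [dif_pos h]
    exact gh_mul_congr S c hc n α β _ _ _ _ h.choose_spec.symm
end

section
/- Let A = {A_0,…,A_d} be an association scheme on v vertices with principal idempotents E_0,…,E_d and matrix of eigenvalues P, and let n ≥ 1. Then for all x, y ∈ V^n, in the polynomial ring ℂ[s_0,…,s_d] one has Σ_α s^α·(A_α)_{x,y} = Σ_β (Ps)^β·(E_β)_{x,y}, where both sums are over all vectors of d+1 nonnegative integers summing to n, and (Ps)^β = Π_{j=0}^{d} (Σ_{i=0}^{d} P_{j,i}·s_i)^{β(j)}. -/
open Matrix Finset MvPolynomial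

open Classical in
/-- The matrix `E_β` built from the idempotents `E_0, …, E_d`. -/
noncomputable def idemMat {d : ℕ} {V : Type} [Fintype V] [DecidableEq V]
    (E : Fin (d + 1) → Matrix V V ℂ) (n : ℕ) (β : Fin (d + 1) → ℕ) :
    Matrix (Fin n → V) (Fin n → V) ℂ :=
  Matrix.of fun x y =>
    ∑ f ∈ Finset.univ.filter
        (fun f : Fin n → Fin (d + 1) =>
          ∀ r, (Finset.univ.filter fun j => f j = r).card = β r),
      ∏ j, E (f j) (x j) (y j)

lemma aux_exists {d : ℕ} {V : Type} [Fintype V] [DecidableEq V]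
    (S : AssocScheme d V) (a b : V) :
    ∃ g : Fin (d + 1), ∀ r, S.A r a b = if g = r then 1 else 0 := by
  classical
  have h1 : ∑ i, S.A i a b = 1 := by
    have := congrFun (congrFun S.A_sum a) b
    simpa [Matrix.sum_apply] using this
  have h2 : ∀ i, S.A i a b = if S.A i a b = 1 then 1 else 0 := by
    intro i
    rcases S.entries_zero_or_one i a b with h | h <;> simp [h]
  have h3 : (Finset.univ.filter fun i => S.A i a b = 1).card = 1 := by
    rw [Finset.sum_congr rfl (fun i _ => h2 i), Finset.sum_boole] at h1
    exact_mod_cast h1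
  obtain ⟨g, hg⟩ := Finset.card_eq_one.mp h3
  refine ⟨g, fun r => ?_⟩
  have h4 : S.A r a b = 1 ↔ r = g := by
    have := Finset.ext_iff.mp hg r
    simpa using this
  rw [h2 r]
  simp only [h4, eq_comm]

lemma aux_prod {d n : ℕ} {R : Type*} [CommMonoid R] (t : Fin (d + 1) → R)
    (f : Fin n → Fin (d + 1)) :
    ∏ j, t (f j) = ∏ r, t r ^ (Finset.univ.filter fun j => f j = r).card := by
  rw [← Finset.prod_fiberwise Finset.univ f]
  refine Finset.prod_congr rfl fun r _ => ?_
  rw [Finset.prod_congr rfl (g := fun _ => t r), Finset.prod_const]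
  intro j hj
  rw [(Finset.mem_filter.mp hj).2]

lemma aux_mem {d n : ℕ} (f : Fin n → Fin (d + 1)) :
    (fun r => (Finset.univ.filter fun j => f j = r).card) ∈
      Finset.Nat.antidiagonalTuple (d + 1) n := by
  rw [Finset.Nat.mem_antidiagonalTuple]
  have := Finset.card_eq_sum_card_fiberwise (f := f) (s := Finset.univ) (t := Finset.univ)
    (by simp)
  simpa using this.symm

/-- `Σ_α s^α (A_α)_{x,y} = Σ_β (Ps)^β (E_β)_{x,y}`. -/
theorem ham_eq_idem_generating_function {V : Type} [Fintype V] [DecidableEq V]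
    {d : ℕ} (S : AssocScheme d V)
    (E : Fin (d + 1) → Matrix V V ℂ)
    (hE0 : E 0 = (Fintype.card V : ℂ)⁻¹ • Matrix.of fun _ _ => 1)
    (hEsum : ∑ j, E j = 1)
    (hEherm : ∀ j, (E j)ᴴ = E j)
    (hEidem : ∀ j, E j * E j = E j)
    (hEorth : ∀ j k, j ≠ k → E j * E k = 0)
    (P : Matrix (Fin (d + 1)) (Fin (d + 1)) ℂ)
    (hAE : ∀ i, S.A i = ∑ j, P j i • E j)
    (n : ℕ) (hn : 1 ≤ n) (x y : Fin n → V) :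
    (∑ α ∈ Finset.Nat.antidiagonalTuple (d + 1) n,
        MvPolynomial.C (S.ham n α x y) * ∏ i : Fin (d + 1), MvPolynomial.X i ^ α i)
      = ∑ β ∈ Finset.Nat.antidiagonalTuple (d + 1) n,
          MvPolynomial.C (idemMat E n β x y) *
            ∏ j : Fin (d + 1),
              (∑ i : Fin (d + 1), MvPolynomial.C (P j i) * MvPolynomial.X i) ^ β j := by
  classical
  trans ∏ j, ∑ r, MvPolynomial.C (S.A r (x j) (y j)) * (MvPolynomial.X r : MvPolynomial (Fin (d + 1)) ℂ)
  · choose g hg using fun j => aux_exists S (x j) (y j)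
    have hp : S.profile n x y = fun r => (Finset.univ.filter fun j => g j = r).card := by
      funext r
      unfold AssocScheme.profile
      congr 1
      ext j
      simp [hg]
    have hR : ∀ j, ∑ r, MvPolynomial.C (S.A r (x j) (y j)) *
        (MvPolynomial.X r : MvPolynomial (Fin (d + 1)) ℂ) = MvPolynomial.X (g j) := by
      intro j
      rw [Finset.sum_eq_single (g j)]
      · simp [hg]
      · intro r _ hr
        simp [hg, hr.symm]
      · simp
    rw [Finset.prod_congr rfl (fun j _ => hR j), aux_prod,
      Finset.sum_eq_single (S.profile n x y)]
    · simp [AssocScheme.ham, hp]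
    · intro α _ hα
      simp [AssocScheme.ham, hα.symm]
    · intro h
      exact absurd (hp ▸ aux_mem g) h
  · have hL : ∀ j, ∑ r, MvPolynomial.C (S.A r (x j) (y j)) *
        (MvPolynomial.X r : MvPolynomial (Fin (d + 1)) ℂ) =
        ∑ k, MvPolynomial.C (E k (x j) (y j)) *
          ∑ i, MvPolynomial.C (P k i) * MvPolynomial.X i := by
      intro j
      simp_rw [hAE, Matrix.sum_apply, Matrix.smul_apply, map_sum, Finset.sum_mul, Finset.mul_sum]
      rw [Finset.sum_comm]
      refine Finset.sum_congr rfl fun k _ => Finset.sum_congr rfl fun i _ => ?_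
      rw [smul_eq_mul, map_mul]
      ring
    rw [Finset.prod_congr rfl (fun j _ => hL j), Finset.prod_univ_sum, Fintype.piFinset_univ]
    rw [← Finset.sum_fiberwise_of_maps_to
      (g := fun f : Fin n → Fin (d + 1) => fun r => (Finset.univ.filter fun j => f j = r).card)
      (fun f _ => aux_mem f)]
    refine Finset.sum_congr rfl fun β _ => ?_
    simp only [idemMat, Matrix.of_apply, map_sum, Finset.sum_mul]
    refine Finset.sum_congr ?_ fun f hf => ?_
    · ext f
      simp [funext_iff]
    · have hf' := (Finset.mem_filter.mp hf).2
      rw [Finset.prod_mul_distrib, map_prod,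
        aux_prod (fun k => ∑ i, MvPolynomial.C (P k i) * MvPolynomial.X i) f]
      congr 1
      refine Finset.prod_congr rfl fun r _ => ?_
      rw [← hf']
end

section
/- Let A = {A_0,…,A_d} be an association scheme on v vertices with principal idempotents E_0,…,E_d and matrix of eigenvalues P (which is invertible), and let n ≥ 1. Then for all x, y ∈ V^n, in the polynomial ring ℂ[t_0,…,t_d] one has Σ_α (P^{-1}t)^α·(A_α)_{x,y} = Σ_β t^β·(E_β)_{x,y}, where both sums are over all vectors of d+1 nonnegative integers summing to n, and (P^{-1}t)^α = Π_{i=0}^{d} (Σ_{j=0}^{d} (P^{-1})_{i,j}·t_j)^{α(i)}. -/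
open Matrix Finset MvPolynomial

theorem idemMat_gen {V : Type} [Fintype V] [DecidableEq V] {d : ℕ}
    (M : Fin (d + 1) → Matrix V V ℂ) (n : ℕ) (x y : Fin n → V)
    (g : Fin (d + 1) → MvPolynomial (Fin (d + 1)) ℂ) :
    ∑ β ∈ Finset.Nat.antidiagonalTuple (d + 1) n,
      MvPolynomial.C (idemMat M n β x y) * ∏ j : Fin (d + 1), g j ^ β j
      = ∏ k, ∑ j, MvPolynomial.C (M j (x k) (y k)) * g j := by
  classical
  rw [Finset.prod_univ_sum, Fintype.piFinset_univ]
  rw [← Finset.sum_fiberwise_of_maps_to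
    (g := fun (f : Fin n → Fin (d + 1)) (r : Fin (d + 1)) =>
      (Finset.univ.filter fun j => f j = r).card)
    (t := Finset.Nat.antidiagonalTuple (d + 1) n)]
  · refine Finset.sum_congr rfl fun β _ => ?_
    simp only [idemMat, Matrix.of_apply, map_sum, Finset.sum_mul]
    refine Finset.sum_congr ?_ fun f hf => ?_
    · ext f
      simp [funext_iff]
    · simp only [Finset.mem_filter, Finset.mem_univ, true_and, funext_iff] at hf
      rw [Finset.prod_mul_distrib, map_prod]
      congr 1
      rw [← Finset.prod_fiberwise (s := Finset.univ) (g := f)]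
      refine Finset.prod_congr rfl fun r _ => ?_
      rw [← hf r, ← Finset.prod_const]
      refine Finset.prod_congr rfl fun j hj => ?_
      rw [(Finset.mem_filter.1 hj).2]
  · intro f _
    rw [Finset.Nat.mem_antidiagonalTuple]
    simpa using (Finset.card_eq_sum_card_fiberwise (s := Finset.univ) (t := Finset.univ)
      (f := f) (by simp)).symm

theorem AssocScheme.exists_rel {V : Type} [Fintype V] [DecidableEq V] {d : ℕ}
    (S : AssocScheme d V) (a b : V) : ∃ r, ∀ i, S.A i a b = if i = r then 1 else 0 := by
  classical
  have hs : ∑ i, S.A i a b = 1 := by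
    have := congrFun (congrFun S.A_sum a) b
    simpa [Matrix.sum_apply] using this
  have h1 : ∀ i, S.A i a b = if S.A i a b = 1 then 1 else 0 := by
    intro i
    rcases S.entries_zero_or_one i a b with h | h <;> simp [h]
  have hc : (Finset.univ.filter fun i => S.A i a b = 1).card = 1 := by
    rw [Finset.sum_congr rfl fun i _ => h1 i, Finset.sum_boole] at hs
    exact_mod_cast hs
  obtain ⟨r, hr⟩ := Finset.card_eq_one.1 hc
  refine ⟨r, fun i => ?_⟩
  rw [h1 i]
  have : S.A i a b = 1 ↔ i = r := by
    simpa using Finset.ext_iff.1 hr i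
  simp only [this]

theorem AssocScheme.ham_eq {V : Type} [Fintype V] [DecidableEq V] {d : ℕ}
    (S : AssocScheme d V) (n : ℕ) (α : Fin (d + 1) → ℕ) (x y : Fin n → V) :
    S.ham n α x y = idemMat S.A n α x y := by
  classical
  choose r hr using fun j => S.exists_rel (x j) (y j)
  have hp : S.profile n x y = fun i => (Finset.univ.filter fun j => r j = i).card := by
    funext i
    simp [AssocScheme.profile, hr, eq_comm]
  have hf : ∀ f : Fin n → Fin (d + 1), (∏ j, S.A (f j) (x j) (y j)) = if f = r then 1 else 0 := by
    intro f
    simp only [hr, Finset.prod_ite_zero, Finset.prod_const_one, Finset.mem_univ, true_imp_iff,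
      funext_iff]
  simp only [AssocScheme.ham, idemMat, Matrix.of_apply, hf, hp, Finset.sum_ite_eq',
    Finset.mem_filter, Finset.mem_univ, true_and, funext_iff]
  simp only [← funext_iff, Finset.sum_ite_eq', Finset.mem_filter, Finset.mem_univ, true_and]

/-- `Σ_α (P⁻¹t)^α (A_α)_{x,y} = Σ_β t^β (E_β)_{x,y}`. -/
theorem ham_inv_generating_function {V : Type} [Fintype V] [DecidableEq V]
    {d : ℕ} (S : AssocScheme d V)
    (E : Fin (d + 1) → Matrix V V ℂ)
    (hE0 : E 0 = (Fintype.card V : ℂ)⁻¹ • Matrix.of fun _ _ => 1)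
    (hEsum : ∑ j, E j = 1)
    (hEherm : ∀ j, (E j)ᴴ = E j)
    (hEidem : ∀ j, E j * E j = E j)
    (hEorth : ∀ j k, j ≠ k → E j * E k = 0)
    (P : Matrix (Fin (d + 1)) (Fin (d + 1)) ℂ)
    (hPunit : IsUnit P.det)
    (hAE : ∀ i, S.A i = ∑ j, P j i • E j)
    (n : ℕ) (hn : 1 ≤ n) (x y : Fin n → V) :
    (∑ α ∈ Finset.Nat.antidiagonalTuple (d + 1) n,
        MvPolynomial.C (S.ham n α x y) *
          ∏ i : Fin (d + 1),
            (∑ j : Fin (d + 1), MvPolynomial.C (P⁻¹ i j) * MvPolynomial.X j) ^ α i)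
      = ∑ β ∈ Finset.Nat.antidiagonalTuple (d + 1) n,
          MvPolynomial.C (idemMat E n β x y) *
            ∏ j : Fin (d + 1), MvPolynomial.X j ^ β j := by
  simp only [S.ham_eq]
  rw [idemMat_gen, idemMat_gen]
  refine Finset.prod_congr rfl fun k _ => ?_
  have hE : ∀ j, E j = ∑ i, P⁻¹ i j • S.A i := by
    intro j
    have hPP : P * P⁻¹ = 1 := Matrix.mul_nonsing_inv P hPunit
    simp only [hAE, Finset.smul_sum, smul_smul]
    rw [Finset.sum_comm]
    have : ∀ l, ∑ i, (P⁻¹ i j * P l i) • E l = (if l = j then (1 : ℂ) else 0) • E l := by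
      intro l
      rw [← Finset.sum_smul, ← Matrix.one_apply, ← hPP, Matrix.mul_apply]
      simp only [mul_comm]
    simp [this]
  have hE' : ∀ j, E j (x k) (y k) = ∑ i, P⁻¹ i j * S.A i (x k) (y k) := by
    intro j
    rw [hE j]
    simp [Matrix.sum_apply]
  simp only [hE', map_sum, map_mul, Finset.mul_sum, Finset.sum_mul]
  rw [Finset.sum_comm]
  refine Finset.sum_congr rfl fun j _ => Finset.sum_congr rfl fun i _ => ?_
  ring
end

section
/- Let A = {A_0,…,A_d} be an association scheme on v vertices with principal idempotents E_0,…,E_d and matrix of eigenvalues P, and let n ≥ 1. For vectors α, β of d+1 nonnegative integers summing to n, let p_α(β) denote the coefficient of the monomial s^α in the polynomial (Ps)^β = Π_{j=0}^{d} (Σ_{i=0}^{d} P_{j,i}·s_i)^{β(j)}. Then A_α = Σ_β p_α(β)·E_β; in particular A_α·E_β = p_α(β)·E_β, so the scalars p_α(β) are the eigenvalues of the generalized Hamming scheme H(n,A), i.e., the matrix of eigenvalues of H(n,A) is the matrix representing the action of P on homogeneous polynomials of degree n in s_0,…,s_d. -/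
open Matrix Finset MvPolynomial

/-- `p_α(β)`: the coefficient of the monomial `s^α` in `(Ps)^β`. -/
noncomputable def hamEigenvalue (d n : ℕ) (P : Matrix (Fin (d + 1)) (Fin (d + 1)) ℂ)
    (α β : Fin (d + 1) → ℕ) : ℂ :=
  MvPolynomial.coeff (Finsupp.equivFunOnFinite.symm α)
    (∏ j : Fin (d + 1),
      (∑ i : Fin (d + 1), MvPolynomial.C (P j i) * MvPolynomial.X i) ^ β j)

open Classical in
/-- The tensor product of the idempotents along `f`. -/
noncomputable def tens {d : ℕ} {V : Type} (E : Fin (d + 1) → Matrix V V ℂ) (n : ℕ)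
    (f : Fin n → Fin (d + 1)) : Matrix (Fin n → V) (Fin n → V) ℂ :=
  Matrix.of fun x y => ∏ j, E (f j) (x j) (y j)

open Classical in
/-- The type of a word. -/
noncomputable def cnt {d n : ℕ} (f : Fin n → Fin (d + 1)) : Fin (d + 1) → ℕ :=
  fun r => (Finset.univ.filter fun j => f j = r).card

open Classical in
theorem idemMat_eq {d : ℕ} {V : Type} [Fintype V] [DecidableEq V]
    (E : Fin (d + 1) → Matrix V V ℂ) (n : ℕ) (β : Fin (d + 1) → ℕ) :
    idemMat E n β = ∑ f ∈ Finset.univ.filter (fun f : Fin n → Fin (d + 1) => cnt f = β),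
      tens E n f := by
  ext x y
  simp only [idemMat, tens, Matrix.sum_apply, Matrix.of_apply]
  apply Finset.sum_congr _ (fun _ _ => rfl)
  ext f
  simp [cnt, funext_iff]

theorem tens_mul {d : ℕ} {V : Type} [Fintype V] [DecidableEq V]
    (E : Fin (d + 1) → Matrix V V ℂ)
    (hEidem : ∀ j, E j * E j = E j)
    (hEorth : ∀ j k, j ≠ k → E j * E k = 0) (n : ℕ) (f g : Fin n → Fin (d + 1)) :
    tens E n f * tens E n g = if f = g then tens E n g else 0 := by
  have key : tens E n f * tens E n g
      = Matrix.of fun x y => ∏ j, (E (f j) * E (g j)) (x j) (y j) := by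
    ext x y
    simp only [tens, Matrix.mul_apply, Matrix.of_apply]
    rw [Finset.prod_univ_sum, Fintype.piFinset_univ]
    simp only [Finset.prod_mul_distrib]
  rw [key]
  split_ifs with h
  · subst h
    simp only [hEidem, tens]
  · obtain ⟨j, hj⟩ := Function.ne_iff.mp h
    ext x y
    simp only [Matrix.of_apply, Matrix.zero_apply]
    exact Finset.prod_eq_zero (Finset.mem_univ j) (by simp [hEorth _ _ hj])

theorem prod_word {M : Type*} [CommMonoid M] {d n : ℕ} (f : Fin n → Fin (d + 1))
    (L : Fin (d + 1) → M) : ∏ j, L (f j) = ∏ k, L k ^ cnt f k := by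
  classical
  rw [← Finset.prod_fiberwise_of_maps_to (s := Finset.univ) (t := Finset.univ) (g := f)
    (fun _ _ => Finset.mem_univ _)]
  apply Finset.prod_congr rfl
  intro k _
  rw [Finset.prod_congr rfl (g := fun _ => L k)]
  · rw [Finset.prod_const]
    unfold cnt
    congr!
  · intro j hj
    rw [(Finset.mem_filter.mp hj).2]

theorem exists_class {d : ℕ} {V : Type} [Fintype V] [DecidableEq V] (S : AssocScheme d V)
    (x y : V) : ∃ r, ∀ i, S.A i x y = if r = i then 1 else 0 := by
  classical
  have hs : ∑ i, S.A i x y = 1 := by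
    have := congrFun (congrFun S.A_sum x) y
    simpa [Matrix.sum_apply] using this
  have h01 : ∀ i, S.A i x y = if S.A i x y = 1 then 1 else 0 := by
    intro i
    rcases S.entries_zero_or_one i x y with h | h <;> simp [h]
  rw [Finset.sum_congr rfl (fun i _ => h01 i), Finset.sum_boole] at hs
  have hc : (Finset.univ.filter fun i => S.A i x y = 1).card = 1 := by exact_mod_cast hs
  obtain ⟨r, hr⟩ := Finset.card_eq_one.mp hc
  refine ⟨r, fun i => ?_⟩
  have : S.A i x y = 1 ↔ i = r := by
    have := Finset.ext_iff.mp hr i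
    simpa using this
  rw [h01 i]
  simp only [this, eq_comm]

open Classical in
theorem ham_coeff {d : ℕ} {V : Type} [Fintype V] [DecidableEq V] (S : AssocScheme d V)
    (n : ℕ) (α : Fin (d + 1) → ℕ) (x y : Fin n → V) :
    S.ham n α x y = MvPolynomial.coeff (Finsupp.equivFunOnFinite.symm α)
      (∏ j, ∑ i, MvPolynomial.C (S.A i (x j) (y j)) * MvPolynomial.X i) := by
  choose r hr using fun j => exists_class S (x j) (y j)
  have h1 : ∀ j, ∑ i, MvPolynomial.C (S.A i (x j) (y j)) * MvPolynomial.X i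
      = (MvPolynomial.X (r j) : MvPolynomial (Fin (d + 1)) ℂ) := by
    intro j
    simp [hr]
  have h2 : S.profile n x y = cnt r := by
    ext k
    simp [AssocScheme.profile, cnt, hr]
  have h3 : (∏ k, (MvPolynomial.X k : MvPolynomial (Fin (d + 1)) ℂ) ^ cnt r k)
      = MvPolynomial.monomial (Finsupp.equivFunOnFinite.symm (cnt r)) 1 := by
    rw [MvPolynomial.monomial_eq, Finsupp.prod_fintype _ _ (by simp)]
    simp
  simp only [h1]
  rw [prod_word r, h3, MvPolynomial.coeff_monomial]
  simp [AssocScheme.ham, h2]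

theorem ham_expand {V : Type} [Fintype V] [DecidableEq V]
    {d : ℕ} (S : AssocScheme d V)
    (E : Fin (d + 1) → Matrix V V ℂ)
    (P : Matrix (Fin (d + 1)) (Fin (d + 1)) ℂ)
    (hAE : ∀ i, S.A i = ∑ j, P j i • E j)
    (n : ℕ) (α : Fin (d + 1) → ℕ) :
    S.ham n α = ∑ f : Fin n → Fin (d + 1), hamEigenvalue d n P α (cnt f) • tens E n f := by
  ext x y
  rw [ham_coeff]
  have h1 : ∀ j, ∑ i, MvPolynomial.C (S.A i (x j) (y j)) * MvPolynomial.X i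
      = ∑ k, MvPolynomial.C (E k (x j) (y j)) *
        (∑ i, MvPolynomial.C (P k i) * MvPolynomial.X i : MvPolynomial (Fin (d + 1)) ℂ) := by
    intro j
    simp only [hAE, Matrix.sum_apply, Matrix.smul_apply, smul_eq_mul, map_sum, map_mul,
      Finset.sum_mul, Finset.mul_sum]
    rw [Finset.sum_comm]
    refine Finset.sum_congr rfl fun k _ => Finset.sum_congr rfl fun i _ => ?_
    ring
  simp only [h1]
  rw [Finset.prod_univ_sum, Fintype.piFinset_univ, MvPolynomial.coeff_sum, Matrix.sum_apply]
  refine Finset.sum_congr rfl fun f _ => ?_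
  rw [Finset.prod_mul_distrib, ← map_prod, MvPolynomial.coeff_C_mul,
    prod_word f (fun k => (∑ i, MvPolynomial.C (P k i) * MvPolynomial.X i :
      MvPolynomial (Fin (d + 1)) ℂ))]
  simp [hamEigenvalue, tens, mul_comm]

/-- `A_α = Σ_β p_α(β) E_β` and `A_α E_β = p_α(β) E_β`: the numbers
`p_α(β)` are the eigenvalues of `H(n,A)`, i.e. the matrix of eigenvalues of `H(n,A)`
represents the action of `P` on homogeneous polynomials of degree `n`. -/
theorem ham_eigenvalues {V : Type} [Fintype V] [DecidableEq V]
    {d : ℕ} (S : AssocScheme d V)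
    (E : Fin (d + 1) → Matrix V V ℂ)
    (hE0 : E 0 = (Fintype.card V : ℂ)⁻¹ • Matrix.of fun _ _ => 1)
    (hEsum : ∑ j, E j = 1)
    (hEherm : ∀ j, (E j)ᴴ = E j)
    (hEidem : ∀ j, E j * E j = E j)
    (hEorth : ∀ j k, j ≠ k → E j * E k = 0)
    (P : Matrix (Fin (d + 1)) (Fin (d + 1)) ℂ)
    (hAE : ∀ i, S.A i = ∑ j, P j i • E j)
    (n : ℕ) (hn : 1 ≤ n) :
    (∀ α ∈ Finset.Nat.antidiagonalTuple (d + 1) n,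
        S.ham n α = ∑ β ∈ Finset.Nat.antidiagonalTuple (d + 1) n,
          hamEigenvalue d n P α β • idemMat E n β) ∧
    (∀ α ∈ Finset.Nat.antidiagonalTuple (d + 1) n,
      ∀ β ∈ Finset.Nat.antidiagonalTuple (d + 1) n,
        S.ham n α * idemMat E n β = hamEigenvalue d n P α β • idemMat E n β) := by
  classical
  refine ⟨fun α _ => ?_, fun α _ β _ => ?_⟩
  · rw [ham_expand S E P hAE n α, ← Finset.sum_fiberwise_of_maps_to (g := cnt)
      (t := Finset.Nat.antidiagonalTuple (d + 1) n)]
    · refine Finset.sum_congr rfl fun β _ => ?_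
      rw [idemMat_eq, Finset.smul_sum]
      refine Finset.sum_congr (by congr!) fun f hf => ?_
      rw [(Finset.mem_filter.mp hf).2]
    · intro f _
      rw [Finset.Nat.mem_antidiagonalTuple]
      have := Finset.card_eq_sum_card_fiberwise (f := f) (s := Finset.univ) (t := Finset.univ)
        (fun _ _ => by simp)
      simp only [Finset.card_univ, Fintype.card_fin] at this
      unfold cnt
      refine Eq.trans ?_ this.symm
      congr!
  · rw [idemMat_eq, Finset.mul_sum, Finset.smul_sum]
    refine Finset.sum_congr rfl fun g hg => ?_
    rw [ham_expand S E P hAE n α, Finset.sum_mul, Finset.sum_eq_single g]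
    · rw [Matrix.smul_mul, tens_mul E hEidem hEorth, if_pos rfl, (Finset.mem_filter.mp hg).2]
    · intro f _ hf
      rw [Matrix.smul_mul, tens_mul E hEidem hEorth, if_neg hf, smul_zero]
    · simp
end

section
/- Let A = {A_0,…,A_d} be an association scheme with Bose-Mesner algebra 𝒜, and let Γ be a group of algebra automorphisms of 𝒜. Then the set of matrices in 𝒜 fixed by every element of Γ is the Bose-Mesner algebra of a subscheme of A: there exists an association scheme B = {B_0,…,B_e} such that each B_k is a sum of some of the matrices A_i and the complex linear span of B_0,…,B_e equals {M ∈ 𝒜 : M^ψ = M for all ψ ∈ Γ}. -/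
open Matrix Finset

/-- The Bose–Mesner algebra of a scheme: the complex span of its matrices. -/
noncomputable def AssocScheme.bm {d : ℕ} {V : Type} [Fintype V] [DecidableEq V]
    (S : AssocScheme d V) : Submodule ℂ (Matrix V V ℂ) :=
  Submodule.span ℂ (Set.range S.A)

/-- `ψ` is an algebra automorphism of the Bose–Mesner algebra of `S`: a linear
bijection of the algebra onto itself respecting conjugate transposition, matrix
multiplication and the Schur (Hadamard) product. -/
def IsBMAut {d : ℕ} {V : Type} [Fintype V] [DecidableEq V]
    (S : AssocScheme d V) (ψ : Matrix V V ℂ → Matrix V V ℂ) : Prop :=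
  (∀ M ∈ S.bm, ψ M ∈ S.bm) ∧
  Set.BijOn ψ (S.bm : Set (Matrix V V ℂ)) (S.bm : Set (Matrix V V ℂ)) ∧
  (∀ M ∈ S.bm, ∀ N ∈ S.bm, ψ (M + N) = ψ M + ψ N) ∧
  (∀ (c : ℂ), ∀ M ∈ S.bm, ψ (c • M) = c • ψ M) ∧
  (∀ M ∈ S.bm, ψ Mᴴ = (ψ M)ᴴ) ∧
  (∀ M ∈ S.bm, ∀ N ∈ S.bm, ψ (M * N) = ψ M * ψ N) ∧
  (∀ M ∈ S.bm, ∀ N ∈ S.bm, ψ (Matrix.hadamard M N) = Matrix.hadamard (ψ M) (ψ N))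

namespace AssocScheme

variable {V : Type} [Fintype V] [DecidableEq V] {d : ℕ}

lemma exists_idx (S : AssocScheme d V) :
    ∃ idx : V → V → Fin (d + 1), ∀ i x y, S.A i x y = if idx x y = i then 1 else 0 := by
  classical
  have key : ∀ x y, ∃ j, ∀ i, S.A i x y = if j = i then 1 else 0 := by
    intro x y
    have hs : ∑ i, S.A i x y = 1 := by
      have := congrFun (congrFun S.A_sum x) y
      simpa [Matrix.sum_apply] using this
    have hs2 : ∑ i, S.A i x y = ((Finset.univ.filter fun i => S.A i x y = 1).card : ℂ) := by
      rw [Finset.card_filter]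
      push_cast
      refine Finset.sum_congr rfl fun i _ => ?_
      rcases S.entries_zero_or_one i x y with h | h <;> simp [h]
    rw [hs2] at hs
    have hc : (Finset.univ.filter fun i => S.A i x y = 1).card = 1 := by exact_mod_cast hs
    obtain ⟨j, hj⟩ := Finset.card_eq_one.mp hc
    refine ⟨j, fun i => ?_⟩
    have hi : S.A i x y = 1 ↔ i = j := by
      have := Finset.ext_iff.mp hj i
      simpa using this
    by_cases h : j = i
    · rw [if_pos h]; exact hi.2 h.symm
    · rw [if_neg h]
      rcases S.entries_zero_or_one i x y with h0 | h0
      · exact h0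
      · exact absurd (hi.1 h0).symm h
  choose idx h using key
  exact ⟨idx, fun i x y => h x y i⟩

lemma mem_bm_iff (S : AssocScheme d V) {idx : V → V → Fin (d + 1)}
    (hidx : ∀ i x y, S.A i x y = if idx x y = i then 1 else 0) (M : Matrix V V ℂ) :
    M ∈ S.bm ↔ ∃ c : Fin (d + 1) → ℂ, ∀ x y, M x y = c (idx x y) := by
  unfold AssocScheme.bm
  rw [Submodule.mem_span_range_iff_exists_fun]
  refine exists_congr fun c => ?_
  constructor
  · rintro rfl x y
    simp [Matrix.sum_apply, hidx]
  · intro h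
    ext x y
    simp [Matrix.sum_apply, hidx, h]

lemma A_mem (S : AssocScheme d V) (i) : S.A i ∈ S.bm := Submodule.subset_span ⟨i, rfl⟩

lemma one_mem_bm (S : AssocScheme d V) : (1 : Matrix V V ℂ) ∈ S.bm := by
  rw [← S.A_zero]; exact S.A_mem 0

lemma J_mem_bm (S : AssocScheme d V) : (Matrix.of fun _ _ => 1 : Matrix V V ℂ) ∈ S.bm := by
  rw [← S.A_sum]; exact Submodule.sum_mem _ fun i _ => S.A_mem i

lemma mul_mem_bm (S : AssocScheme d V) {M N : Matrix V V ℂ} (hM : M ∈ S.bm) (hN : N ∈ S.bm) :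
    M * N ∈ S.bm := by
  unfold AssocScheme.bm at hM hN
  induction hM, hN using Submodule.span_induction₂ with
  | mem_mem x y hx hy =>
    obtain ⟨i, rfl⟩ := hx
    obtain ⟨j, rfl⟩ := hy
    obtain ⟨p, hp⟩ := S.mul_eq_lin_comb i j
    rw [hp]
    exact Submodule.sum_mem _ fun k _ => Submodule.smul_mem _ _ (S.A_mem k)
  | zero_left y hy => simp
  | zero_right x hx => simp
  | add_left x y z _ _ _ h1 h2 => rw [add_mul]; exact Submodule.add_mem _ h1 h2
  | add_right x y z _ _ _ h1 h2 => rw [mul_add]; exact Submodule.add_mem _ h1 h2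
  | smul_left r x y _ _ h => rw [smul_mul_assoc]; exact Submodule.smul_mem _ _ h
  | smul_right r x y _ _ h => rw [mul_smul_comm]; exact Submodule.smul_mem _ _ h

lemma comm_bm (S : AssocScheme d V) {M N : Matrix V V ℂ} (hM : M ∈ S.bm) (hN : N ∈ S.bm) :
    M * N = N * M := by
  unfold AssocScheme.bm at hM hN
  induction hM, hN using Submodule.span_induction₂ with
  | mem_mem x y hx hy =>
    obtain ⟨i, rfl⟩ := hx
    obtain ⟨j, rfl⟩ := hy
    exact S.mul_comm' i j
  | zero_left y hy => simp
  | zero_right x hx => simp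
  | add_left x y z _ _ _ h1 h2 => rw [add_mul, mul_add, h1, h2]
  | add_right x y z _ _ _ h1 h2 => rw [mul_add, add_mul, h1, h2]
  | smul_left r x y _ _ h => rw [smul_mul_assoc, mul_smul_comm, h]
  | smul_right r x y _ _ h => rw [smul_mul_assoc, mul_smul_comm, h]

lemma hadamard_mem_bm (S : AssocScheme d V) {M N : Matrix V V ℂ}
    (hM : M ∈ S.bm) (hN : N ∈ S.bm) : Matrix.hadamard M N ∈ S.bm := by
  obtain ⟨idx, hidx⟩ := S.exists_idx
  rw [S.mem_bm_iff hidx] at *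
  obtain ⟨c, hc⟩ := hM
  obtain ⟨c', hc'⟩ := hN
  exact ⟨fun i => c i * c' i, fun x y => by simp [hc, hc']⟩

lemma conj_mem_bm (S : AssocScheme d V) {M : Matrix V V ℂ}
    (hM : M ∈ S.bm) : Mᴴ ∈ S.bm := by
  unfold AssocScheme.bm at hM
  induction hM using Submodule.span_induction with
  | mem x hx =>
    obtain ⟨i, rfl⟩ := hx
    obtain ⟨j, hj⟩ := S.transpose_mem i
    have : (S.A i)ᴴ = S.A j := by
      rw [← hj]
      ext x y
      rcases S.entries_zero_or_one i y x with h | h <;> simp [h]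
    rw [this]; exact S.A_mem j
  | zero => simp
  | add x y _ _ h1 h2 => rw [Matrix.conjTranspose_add]; exact Submodule.add_mem _ h1 h2
  | smul r x _ h => rw [Matrix.conjTranspose_smul]; exact Submodule.smul_mem _ _ h

lemma core [Nonempty V] (S : AssocScheme d V) (F : Submodule ℂ (Matrix V V ℂ))
    (hF : F ≤ S.bm) (h1 : (1 : Matrix V V ℂ) ∈ F)
    (hJ : (Matrix.of fun _ _ => 1 : Matrix V V ℂ) ∈ F)
    (hmul : ∀ M ∈ F, ∀ N ∈ F, M * N ∈ F)
    (hhad : ∀ M ∈ F, ∀ N ∈ F, Matrix.hadamard M N ∈ F)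
    (hstar : ∀ M ∈ F, Mᴴ ∈ F) :
    ∃ (e : ℕ) (T : AssocScheme e V),
      (∀ k, ∃ s : Finset (Fin (d + 1)), T.A k = ∑ i ∈ s, S.A i) ∧ T.bm = F := by
  classical
  obtain ⟨idx, hidx⟩ := S.exists_idx
  let r : Setoid (V × V) :=
    { r := fun p q => ∀ M ∈ F, M p.1 p.2 = M q.1 q.2
      iseqv := ⟨fun _ _ _ => rfl, fun h M hM => (h M hM).symm,
        fun h h' M hM => (h M hM).trans (h' M hM)⟩ }
  have hr : ∀ p q, (Quotient.mk r p = Quotient.mk r q) ↔ ∀ M ∈ F, M p.1 p.2 = M q.1 q.2 :=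
    fun p q => Quotient.eq
  let B : Quotient r → Matrix V V ℂ :=
    fun k => Matrix.of fun x y => if Quotient.mk r (x, y) = k then 1 else 0
  have hBapp : ∀ k x y, B k x y = if Quotient.mk r (x, y) = k then 1 else 0 :=
    fun _ _ _ => rfl
  -- indicator matrices lie in F
  have hB : ∀ k, B k ∈ F := by
    intro k
    induction k using Quotient.inductionOn with
    | h p =>
    have step : ∀ s : Finset (V × V), ∃ N ∈ F, N p.1 p.2 = 1 ∧
        ∀ q ∈ s, Quotient.mk r q ≠ Quotient.mk r p → N q.1 q.2 = 0 := by
      intro s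
      induction s using Finset.induction_on with
      | empty => exact ⟨_, hJ, by simp, by simp⟩
      | insert q s _ ih =>
        obtain ⟨N, hN, hNp, hNs⟩ := ih
        by_cases hq : Quotient.mk r q = Quotient.mk r p
        · refine ⟨N, hN, hNp, fun q' hq' hne => ?_⟩
          rcases Finset.mem_insert.mp hq' with rfl | h
          · exact absurd hq hne
          · exact hNs q' h hne
        · have hq0 := hq
          rw [hr] at hq
          push Not at hq
          obtain ⟨M, hM, hne⟩ := hq
          have hne' : M p.1 p.2 - M q.1 q.2 ≠ 0 := sub_ne_zero.mpr hne.symm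
          let L : Matrix V V ℂ := (M p.1 p.2 - M q.1 q.2)⁻¹ •
            (M - (M q.1 q.2) • (Matrix.of fun _ _ => 1 : Matrix V V ℂ))
          have hL : L ∈ F := F.smul_mem _ (F.sub_mem hM (F.smul_mem _ hJ))
          refine ⟨Matrix.hadamard N L, hhad _ hN _ hL, ?_, ?_⟩
          · simp [L, hNp, hne']
          · intro q' hq' hne2
            rcases Finset.mem_insert.mp hq' with rfl | h
            · simp [L]
            · simp [hNs q' h hne2]
    obtain ⟨N, hN, hNp, hNs⟩ := step Finset.univ
    have : B (Quotient.mk r p) = N := by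
      ext x y
      rw [hBapp]
      split_ifs with h
      · rw [← hNp]; exact ((hr _ _).1 h N hN).symm
      · exact (hNs (x, y) (Finset.mem_univ _) h).symm
    rw [this]; exact hN
  have hexp : ∀ M ∈ F, M = ∑ k, (M k.out.1 k.out.2) • B k := by
    intro M hM
    ext x y
    simp only [Matrix.sum_apply, Matrix.smul_apply, hBapp, smul_eq_mul, mul_ite, mul_one,
      mul_zero, Finset.sum_ite_eq, Finset.mem_univ, if_true]
    exact (hr (x, y) _).1 (Quotient.out_eq _).symm M hM
  -- diagonal
  obtain ⟨v⟩ := ‹Nonempty V›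
  have hdiag : B (Quotient.mk r (v, v)) = 1 := by
    ext x y
    rw [hBapp]
    by_cases hxy : x = y
    · subst hxy
      rw [if_pos, Matrix.one_apply_eq]
      rw [hr]
      intro M hM
      obtain ⟨c, hc⟩ := (S.mem_bm_iff hidx M).1 (hF hM)
      have h0 : ∀ z, idx z z = 0 := by
        intro z
        have := hidx 0 z z
        rw [S.A_zero] at this
        by_contra hne
        simp [hne] at this
      simp [hc, h0]
    · rw [if_neg, Matrix.one_apply_ne hxy]
      intro h
      have := (hr _ _).1 h 1 h1
      simp [hxy] at this
  have hcard : 0 < Fintype.card (Quotient r) := Fintype.card_pos_iff.mpr ⟨Quotient.mk r (v, v)⟩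
  obtain ⟨e, he⟩ : ∃ e, Fintype.card (Quotient r) = e + 1 := ⟨_, (Nat.succ_pred_eq_of_pos hcard).symm⟩
  let f0 : Fin (e + 1) ≃ Quotient r := (Fintype.equivFinOfCardEq he).symm
  let f : Fin (e + 1) ≃ Quotient r := f0.trans (Equiv.swap (f0 0) (Quotient.mk r (v, v)))
  have hf0 : f 0 = Quotient.mk r (v, v) := by simp [f]
  have hexp' : ∀ M ∈ F, M = ∑ k, (M (f k).out.1 (f k).out.2) • B (f k) := by
    intro M hM
    rw [f.sum_comp (fun k => (M k.out.1 k.out.2) • B k)]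
    exact hexp M hM
  let T : AssocScheme e V :=
    { A := fun k => B (f k)
      entries_zero_or_one := by
        intro i x y
        rw [hBapp]
        split_ifs <;> simp
      A_zero := by rw [hf0, hdiag]
      A_sum := by
        rw [f.sum_comp B]
        ext x y
        simp [Matrix.sum_apply, hBapp]
      transpose_mem := by
        intro i
        obtain ⟨⟨a, b⟩, hp⟩ := Quotient.exists_rep (f i)
        refine ⟨f.symm (Quotient.mk r (b, a)), ?_⟩
        rw [← hp, Equiv.apply_symm_apply]
        have aux : ∀ x y a b, Quotient.mk r (x, y) = Quotient.mk r (a, b) →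
            Quotient.mk r (y, x) = Quotient.mk r (b, a) := by
          intro x y a b h
          rw [hr] at h ⊢
          intro M hM
          have := h _ (hstar M hM)
          exact star_injective this
        ext x y
        rw [Matrix.transpose_apply, hBapp, hBapp]
        exact if_congr ⟨aux _ _ _ _, aux _ _ _ _⟩ rfl rfl
      mul_eq_lin_comb := fun i j => ⟨_, hexp' _ (hmul _ (hB _) _ (hB _))⟩
      mul_comm' := fun i j => S.comm_bm (hF (hB _)) (hF (hB _)) }
  refine ⟨e, T, ?_, ?_⟩
  · intro k
    change ∃ s : Finset (Fin (d + 1)), B (f k) = _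
    obtain ⟨c, hc⟩ := (S.mem_bm_iff hidx _).1 (hF (hB (f k)))
    refine ⟨Finset.univ.filter fun i => c i = 1, ?_⟩
    ext x y
    have h01 := hBapp (f k) x y
    rw [hc] at h01 ⊢
    simp only [Matrix.sum_apply, hidx, Finset.sum_ite_eq, Finset.mem_filter, Finset.mem_univ,
      true_and]
    by_cases h : Quotient.mk r (x, y) = f k
    · rw [if_pos h] at h01; simp [h01]
    · rw [if_neg h] at h01; simp [h01]
  · apply le_antisymm
    · refine Submodule.span_le.mpr ?_
      rintro _ ⟨k, rfl⟩
      exact hB _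
    · intro M hM
      rw [hexp' M hM]
      exact Submodule.sum_mem _ fun k _ => Submodule.smul_mem _ _ (T.A_mem k)

end AssocScheme

/-- The matrices of the Bose–Mesner algebra fixed by every member of a
group `Γ` of algebra automorphisms form the Bose–Mesner algebra of a subscheme. -/
theorem fixed_subalgebra_is_subscheme {V : Type} [Fintype V] [DecidableEq V]
    {d : ℕ} (S : AssocScheme d V)
    (Γ : Set (Matrix V V ℂ → Matrix V V ℂ))
    (hΓaut : ∀ ψ ∈ Γ, IsBMAut S ψ)
    (hΓone : ∃ ψ ∈ Γ, ∀ M ∈ S.bm, ψ M = M)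
    (hΓcomp : ∀ ψ ∈ Γ, ∀ φ ∈ Γ, ∃ χ ∈ Γ, ∀ M ∈ S.bm, χ M = ψ (φ M))
    (hΓinv : ∀ ψ ∈ Γ, ∃ φ ∈ Γ, ∀ M ∈ S.bm, φ (ψ M) = M) :
    ∃ (e : ℕ) (T : AssocScheme e V),
      (∀ k, ∃ s : Finset (Fin (d + 1)), T.A k = ∑ i ∈ s, S.A i) ∧
      ((T.bm : Set (Matrix V V ℂ))
          = {M | M ∈ S.bm ∧ ∀ ψ ∈ Γ, ψ M = M}) := by
  rcases isEmpty_or_nonempty V with hV | hV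
  · refine ⟨d, S, fun k => ⟨∅, Subsingleton.elim _ _⟩, ?_⟩
    ext M
    simp only [SetLike.mem_coe, Set.mem_setOf_eq]
    exact ⟨fun h => ⟨h, fun _ _ => Subsingleton.elim _ _⟩, fun h => h.1⟩
  · let F : Submodule ℂ (Matrix V V ℂ) :=
      { carrier := {M | M ∈ S.bm ∧ ∀ ψ ∈ Γ, ψ M = M}
        zero_mem' := by
          refine ⟨S.bm.zero_mem, fun ψ hψ => ?_⟩
          have := (hΓaut ψ hψ).2.2.2.1 0 0 S.bm.zero_mem
          simpa using this
        add_mem' := by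
          rintro M N ⟨hM, hM'⟩ ⟨hN, hN'⟩
          refine ⟨S.bm.add_mem hM hN, fun ψ hψ => ?_⟩
          rw [(hΓaut ψ hψ).2.2.1 M hM N hN, hM' ψ hψ, hN' ψ hψ]
        smul_mem' := by
          rintro c M ⟨hM, hM'⟩
          refine ⟨S.bm.smul_mem c hM, fun ψ hψ => ?_⟩
          rw [(hΓaut ψ hψ).2.2.2.1 c M hM, hM' ψ hψ] }
    obtain ⟨e, T, hT, hTF⟩ := S.core F (fun M hM => hM.1)
      (by
        refine ⟨S.one_mem_bm, fun ψ hψ => ?_⟩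
        obtain ⟨_, hbij, _, _, _, hm, _⟩ := hΓaut ψ hψ
        obtain ⟨N, hN, hN1⟩ := hbij.surjOn S.one_mem_bm
        have := hm 1 S.one_mem_bm N hN
        rw [one_mul, hN1, mul_one] at this
        exact this.symm)
      (by
        refine ⟨S.J_mem_bm, fun ψ hψ => ?_⟩
        obtain ⟨_, hbij, _, _, _, _, hm⟩ := hΓaut ψ hψ
        obtain ⟨N, hN, hN1⟩ := hbij.surjOn S.J_mem_bm
        have h := hm _ S.J_mem_bm N hN
        have e1 : ∀ M : Matrix V V ℂ,
            Matrix.hadamard (Matrix.of fun _ _ => 1 : Matrix V V ℂ) M = M := by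
          intro M; ext x y; simp
        have e2 : ∀ M : Matrix V V ℂ,
            Matrix.hadamard M (Matrix.of fun _ _ => 1 : Matrix V V ℂ) = M := by
          intro M; ext x y; simp
        rw [e1, hN1, e2] at h
        exact h.symm)
      (by
        rintro M ⟨hM, hM'⟩ N ⟨hN, hN'⟩
        refine ⟨S.mul_mem_bm hM hN, fun ψ hψ => ?_⟩
        rw [(hΓaut ψ hψ).2.2.2.2.2.1 M hM N hN, hM' ψ hψ, hN' ψ hψ])
      (by
        rintro M ⟨hM, hM'⟩ N ⟨hN, hN'⟩
        refine ⟨S.hadamard_mem_bm hM hN, fun ψ hψ => ?_⟩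
        rw [(hΓaut ψ hψ).2.2.2.2.2.2 M hM N hN, hM' ψ hψ, hN' ψ hψ])
      (by
        rintro M ⟨hM, hM'⟩
        refine ⟨S.conj_mem_bm hM, fun ψ hψ => ?_⟩
        rw [(hΓaut ψ hψ).2.2.2.2.1 M hM, hM' ψ hψ])
    refine ⟨e, T, hT, ?_⟩
    rw [hTF]
    rfl
end

section
/- Let 𝒜 be a vector space of v×v complex matrices that contains the identity matrix I and the all-ones matrix J, is closed under matrix multiplication, conjugate transposition and Schur (entrywise) multiplication, and in which any two elements commute under matrix multiplication. Then 𝒜 is the Bose-Mesner algebra of an association scheme: 𝒜 has a basis A_0,…,A_d of 01-matrices which forms an association scheme. -/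
open Matrix Finset

/-- A commutative vector space of matrices containing `I` and `J`
that is closed under multiplication, conjugate transposition and Schur multiplication
is the Bose–Mesner algebra of an association scheme: it has a basis of 01-matrices
forming an association scheme. -/
theorem bose_mesner_characterization {V : Type} [Fintype V] [DecidableEq V]
    [Nonempty V] (𝒜 : Submodule ℂ (Matrix V V ℂ))
    (hI : (1 : Matrix V V ℂ) ∈ 𝒜)
    (hJ : (Matrix.of fun _ _ => (1 : ℂ)) ∈ 𝒜)
    (hmul : ∀ M ∈ 𝒜, ∀ N ∈ 𝒜, M * N ∈ 𝒜)
    (hstar : ∀ M ∈ 𝒜, Mᴴ ∈ 𝒜)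
    (hschur : ∀ M ∈ 𝒜, ∀ N ∈ 𝒜, Matrix.hadamard M N ∈ 𝒜)
    (hcomm : ∀ M ∈ 𝒜, ∀ N ∈ 𝒜, M * N = N * M) :
    ∃ (d : ℕ) (S : AssocScheme d V),
      Submodule.span ℂ (Set.range S.A) = 𝒜 ∧ LinearIndependent ℂ S.A := by
  classical
  let r : Setoid (V × V) :=
    { r := fun p q => ∀ M ∈ 𝒜, M p.1 p.2 = M q.1 q.2
      iseqv := ⟨fun _ _ _ => rfl, fun h M hM => (h M hM).symm,
        fun h1 h2 M hM => (h1 M hM).trans (h2 M hM)⟩ }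
  let E : Quotient r → Matrix V V ℂ := fun c => Matrix.of fun x y =>
    if (Quotient.mk r (x, y)) = c then 1 else 0
  have mk_eq : ∀ p q : V × V, Quotient.mk r p = Quotient.mk r q ↔
      ∀ M ∈ 𝒜, M p.1 p.2 = M q.1 q.2 := fun p q => Quotient.eq
  have hprod : ∀ (s : Finset (V × V)) (f : V × V → Matrix V V ℂ), (∀ q, f q ∈ 𝒜) →
      (Matrix.of fun x y => ∏ q ∈ s, f q x y) ∈ 𝒜 := by
    intro s f hf
    induction s using Finset.induction_on with
    | empty => simpa using hJ
    | insert a s ha ih =>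
      have := hschur _ (hf a) _ ih
      convert this using 1
      ext x y
      simp [Finset.prod_insert ha, Matrix.hadamard]
  have hE : ∀ c, E c ∈ 𝒜 := by
    intro c
    induction c using Quotient.inductionOn with
    | h p =>
    have hsep : ∀ q : V × V, ∃ N ∈ 𝒜, N p.1 p.2 = 1 ∧
        (Quotient.mk r q ≠ Quotient.mk r p → N q.1 q.2 = 0) := by
      intro q
      by_cases h : Quotient.mk r q = Quotient.mk r p
      · exact ⟨_, hJ, rfl, fun h' => absurd h h'⟩
      · have h2 := h
        rw [mk_eq] at h2
        push Not at h2
        obtain ⟨M, hM, hne⟩ := h2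
        refine ⟨(M p.1 p.2 - M q.1 q.2)⁻¹ • (M - M q.1 q.2 • Matrix.of fun _ _ => (1 : ℂ)),
          𝒜.smul_mem _ (𝒜.sub_mem hM (𝒜.smul_mem _ hJ)), ?_, ?_⟩
        · have : M p.1 p.2 - M q.1 q.2 ≠ 0 := sub_ne_zero.2 hne.symm
          simp [this]
        · intro _
          simp
    choose N hN h1 h0 using hsep
    convert hprod Finset.univ N hN using 1
    ext x y
    simp only [E, Matrix.of_apply]
    split_ifs with h
    · symm
      apply Finset.prod_eq_one
      intro q _
      rw [mk_eq] at h
      exact (h _ (hN q)).trans (h1 q)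
    · symm
      exact Finset.prod_eq_zero (Finset.mem_univ (x, y)) (h0 (x, y) h)
  have hexp : ∀ M ∈ 𝒜, M = ∑ c : Quotient r, M c.out.1 c.out.2 • E c := by
    intro M hM
    ext x y
    simp only [Matrix.sum_apply, Matrix.smul_apply, E, Matrix.of_apply, smul_eq_mul, mul_ite,
      mul_one, mul_zero, Finset.sum_ite_eq, Finset.mem_univ, if_true]
    exact ((mk_eq _ _).1 (Quotient.out_eq (Quotient.mk r (x, y))) M hM).symm
  have hdiag : ∀ M ∈ 𝒜, ∀ x y, M x x = M y y := by
    intro M hM x y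
    have h := hcomm _ (hschur _ hI _ hM) _ hJ
    have h' := congrFun (congrFun h x) y
    simpa [Matrix.mul_apply, Matrix.hadamard, Matrix.one_apply] using h'
  obtain ⟨x0⟩ := ‹Nonempty V›
  let c0 : Quotient r := Quotient.mk r (x0, x0)
  have hE0 : E c0 = 1 := by
    ext x y
    simp only [E, c0, Matrix.of_apply, Matrix.one_apply]
    congr 1
    rw [mk_eq]
    apply propext
    constructor
    · intro h
      by_contra hne
      have := h 1 hI
      simp [Matrix.one_apply, hne] at this
    · rintro rfl M hM
      exact hdiag M hM _ _
  have hcard : ∃ d, Fintype.card (Quotient r) = d + 1 :=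
    Nat.exists_eq_succ_of_ne_zero (Fintype.card_pos_iff.2 ⟨c0⟩).ne'
  obtain ⟨d, hd⟩ := hcard
  let e0 : Fin (d + 1) ≃ Quotient r := (Fintype.equivFinOfCardEq hd).symm
  let e : Fin (d + 1) ≃ Quotient r := e0.trans (Equiv.swap (e0 0) c0)
  have he : e 0 = c0 := by simp [e]
  have hexp' : ∀ M ∈ 𝒜, ∃ p : Fin (d + 1) → ℂ, M = ∑ k, p k • E (e k) := by
    intro M hM
    refine ⟨fun k => M (e k).out.1 (e k).out.2, ?_⟩
    rw [Equiv.sum_comp e (fun c : Quotient r => M c.out.1 c.out.2 • E c)]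
    exact hexp M hM
  let S : AssocScheme d V :=
    { A := fun i => E (e i)
      entries_zero_or_one := by
        intro i x y
        simp only [E, Matrix.of_apply]
        split_ifs <;> simp
      A_zero := by rw [he, hE0]
      A_sum := by
        rw [Equiv.sum_comp e E]
        ext x y
        simp [Matrix.sum_apply, E]
      transpose_mem := by
        intro i
        obtain ⟨⟨a, b⟩, hab⟩ := Quotient.exists_rep (e i)
        refine ⟨e.symm (Quotient.mk r (b, a)), ?_⟩
        rw [Equiv.apply_symm_apply, ← hab]
        have key : ∀ x y z w : V, Quotient.mk r (x, y) = Quotient.mk r (z, w) →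
            Quotient.mk r (y, x) = Quotient.mk r (w, z) := by
          intro x y z w h
          rw [mk_eq] at h ⊢
          intro M hM
          have := h _ (hstar M hM)
          exact star_injective this
        ext x y
        simp only [E, Matrix.transpose_apply, Matrix.of_apply]
        congr 1
        exact propext ⟨key _ _ _ _, key _ _ _ _⟩
      mul_eq_lin_comb := fun i j => hexp' _ (hmul _ (hE _) _ (hE _))
      mul_comm' := fun i j => hcomm _ (hE _) _ (hE _) }
  refine ⟨d, S, ?_, ?_⟩
  · apply le_antisymm
    · rw [Submodule.span_le]
      rintro _ ⟨i, rfl⟩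
      exact hE _
    · intro M hM
      obtain ⟨p, hp⟩ := hexp' M hM
      rw [hp]
      exact Submodule.sum_mem _ fun k _ =>
        Submodule.smul_mem _ _ (Submodule.subset_span ⟨k, rfl⟩)
  · rw [Fintype.linearIndependent_iff]
    intro g hg i
    obtain ⟨⟨a, b⟩, hab⟩ := Quotient.exists_rep (e i)
    have h := congrFun (congrFun hg a) b
    simpa [S, E, Matrix.sum_apply, hab] using h
end

section
/- Let A = {A_0,…,A_d} be an association scheme on vertex set V and let m, n ≥ 1. Let φ be the natural bijection from (V^n)^m to V^{mn} given by concatenation. Then for all x, y ∈ (V^n)^m, the H(mn,A)-profile satisfies h(φ(x),φ(y)) = Σ_{k=1}^{m} h(x_k,y_k). Consequently, for each vector α of d+1 nonnegative integers summing to mn, the matrix A_α of H(mn,A), transported along φ, equals the sum of the matrices A_μ of H(m,H(n,A)) over all those classes μ of H(m,H(n,A)) (μ assigns to each vector β of d+1 nonnegative integers summing to n a multiplicity μ(β), with Σ_β μ(β) = m) satisfying Σ_β μ(β)·β = α; that is, H(mn,A) is a subscheme of H(m,H(n,A)). -/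
open Matrix Finset MvPolynomial

/-- Concatenation: the natural bijection `(V^n)^m → V^{mn}`. -/
def concat {V : Type} (m n : ℕ) (x : Fin m → Fin n → V) : Fin (m * n) → V :=
  fun k => x (finProdFinEquiv.symm k).1 (finProdFinEquiv.symm k).2

open Classical in
/-- The class matrix of `H(m, H(n,A))` attached to the multiplicity function `μ`,
which assigns to each profile `β` of `H(n,A)` the number of coordinates `k` whose
pair `(x_k, y_k)` has profile `β`. -/
noncomputable def ham2 {d : ℕ} {V : Type} [Fintype V] [DecidableEq V]
    (S : AssocScheme d V) (n m : ℕ) (μ : (Fin (d + 1) → ℕ) → ℕ) :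
    Matrix (Fin m → Fin n → V) (Fin m → Fin n → V) ℂ :=
  Matrix.of fun x y =>
    if (fun β => (Finset.univ.filter fun k : Fin m => S.profile n (x k) (y k) = β).card) = μ
    then 1 else 0

open Classical in
/-- The classes of `H(m, H(n,A))`: multiplicity functions `μ` supported on the
vectors of `d+1` nonnegative integers summing to `n`, with total multiplicity `m`. -/
noncomputable def classIndex (d n m : ℕ) : Finset ((Fin (d + 1) → ℕ) → ℕ) :=
  ((((Finset.Nat.antidiagonalTuple (d + 1) n).pi fun _ => Finset.range (m + 1)).image
      fun g β => if h : β ∈ Finset.Nat.antidiagonalTuple (d + 1) n then g β h else 0)).filter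
    fun μ => ∑ β ∈ Finset.Nat.antidiagonalTuple (d + 1) n, μ β = m

open Classical in
theorem profile_mem_aux {d : ℕ} {V : Type} [Fintype V] [DecidableEq V]
    (S : AssocScheme d V) (n : ℕ) (x y : Fin n → V) :
    S.profile n x y ∈ Finset.Nat.antidiagonalTuple (d + 1) n := by
  rw [Finset.Nat.mem_antidiagonalTuple]
  have key : ∀ u v : V, (∑ r, if S.A r u v = 1 then 1 else 0 : ℕ) = 1 := by
    intro u v
    have h := congrFun (congrFun S.A_sum u) v
    rw [Matrix.sum_apply] at h
    have h2 : ∀ r, S.A r u v = ((if S.A r u v = 1 then 1 else 0 : ℕ) : ℂ) := by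
      intro r
      rcases S.entries_zero_or_one r u v with h | h <;> simp [h]
    rw [Finset.sum_congr rfl (fun r _ => h2 r), ← Nat.cast_sum] at h
    simp only [Matrix.of_apply] at h
    exact_mod_cast h
  simp only [AssocScheme.profile, Finset.card_filter]
  rw [Finset.sum_comm]
  simp only [key]
  simp

open Classical in
theorem profile_concat_aux {d : ℕ} {V : Type} [Fintype V] [DecidableEq V]
    (S : AssocScheme d V) (m n : ℕ) (x y : Fin m → Fin n → V) :
    S.profile (m * n) (concat m n x) (concat m n y)
      = fun r => ∑ k, S.profile n (x k) (y k) r := by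
  funext r
  simp only [AssocScheme.profile, Finset.card_filter]
  rw [← Fintype.sum_prod_type' (f := fun k j => if S.A r (x k j) (y k j) = 1 then 1 else 0)]
  exact Equiv.sum_comp finProdFinEquiv.symm
    (fun p : Fin m × Fin n => if S.A r (x p.1 p.2) (y p.1 p.2) = 1 then 1 else 0)

open Classical in
theorem mult_sum_aux {ι : Type} [Fintype ι] {B : Type} (T : Finset B) (f : ι → B)
    (hf : ∀ k, f k ∈ T) (g : B → ℕ) :
    ∑ β ∈ T, (Finset.univ.filter fun k => f k = β).card * g β = ∑ k, g (f k) := by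
  rw [← Finset.sum_fiberwise_of_maps_to (s := Finset.univ) (t := T) (g := f)
    (fun k _ => hf k) (fun k => g (f k))]
  refine Finset.sum_congr rfl fun β _ => ?_
  rw [Finset.sum_congr rfl (g := fun _ => g β)]
  · simp
  · intro k hk
    rw [(Finset.mem_filter.1 hk).2]

open Classical in
theorem mem_classIndex_aux {d n m : ℕ} (f : Fin m → Fin (d + 1) → ℕ)
    (hf : ∀ k, f k ∈ Finset.Nat.antidiagonalTuple (d + 1) n) :
    (fun β => (Finset.univ.filter fun k : Fin m => f k = β).card) ∈ classIndex d n m := by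
  unfold classIndex
  rw [Finset.mem_filter]
  constructor
  · rw [Finset.mem_image]
    refine ⟨fun β _ => (Finset.univ.filter fun k : Fin m => f k = β).card, ?_, ?_⟩
    · rw [Finset.mem_pi]
      intro β _
      rw [Finset.mem_range, Nat.lt_succ_iff]
      exact (Finset.card_le_univ _).trans (by simp)
    · funext β
      split_ifs with h
      · rfl
      · symm
        rw [Finset.card_eq_zero, Finset.filter_eq_empty_iff]
        rintro k _ rfl
        exact h (hf k)
  · have := mult_sum_aux _ f hf (fun _ => 1)
    simp only [mul_one, Finset.sum_const, Finset.card_univ, Fintype.card_fin, smul_eq_mul] at this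
    convert this

/-- Under concatenation, the profile is additive:
`h(φ(x), φ(y)) = Σ_k h(x_k, y_k)`, and each class matrix of `H(mn, A)` is the sum of
the class matrices of `H(m, H(n,A))` refining it; that is, `H(mn,A)` is a subscheme
of `H(m, H(n,A))`. -/
theorem ham_iterated_subscheme {V : Type} [Fintype V] [DecidableEq V]
    {d : ℕ} (S : AssocScheme d V) (m n : ℕ) (hm : 1 ≤ m) (hn : 1 ≤ n) :
    (∀ x y : Fin m → Fin n → V,
        S.profile (m * n) (concat m n x) (concat m n y)
          = fun r => ∑ k, S.profile n (x k) (y k) r) ∧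
    (∀ α ∈ Finset.Nat.antidiagonalTuple (d + 1) (m * n),
        (Matrix.of fun x y : Fin m → Fin n → V =>
            S.ham (m * n) α (concat m n x) (concat m n y))
          = ∑ μ ∈ (classIndex d n m).filter
              (fun μ => ∀ r, ∑ β ∈ Finset.Nat.antidiagonalTuple (d + 1) n,
                  μ β * β r = α r),
              ham2 S n m μ) := by
  refine ⟨fun x y => profile_concat_aux S m n x y, fun α _ => ?_⟩
  classical
  ext x y
  rw [Matrix.sum_apply]
  simp only [Matrix.of_apply, AssocScheme.ham, ham2]
  rw [Finset.sum_ite_eq, profile_concat_aux]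
  refine if_congr ?_ rfl rfl
  rw [Finset.mem_filter]
  have hf : ∀ k, S.profile n (x k) (y k) ∈ Finset.Nat.antidiagonalTuple (d + 1) n :=
    fun k => profile_mem_aux S n (x k) (y k)
  have h1 := mem_classIndex_aux _ hf
  have h2 := fun r => mult_sum_aux _ (fun k => S.profile n (x k) (y k)) hf (fun β => β r)
  constructor
  · intro h
    refine ⟨by convert h1, fun r => ?_⟩
    rw [← h]
    convert h2 r
  · rintro ⟨_, h⟩
    funext r
    rw [← h r]
    symm
    convert h2 r
end

section
/- (MacWilliams theorem for generalized Hamming schemes.) Let A = {A_0,…,A_d} be an association scheme on v vertices with principal idempotents E_0,…,E_d and invertible matrix of eigenvalues P, let n ≥ 1, and let C be a nonempty subset of V^n with characteristic column vector χ. Define the weight enumerator W_C(s) = (1/|C|)·Σ_α (χᵀA_αχ)·s^α and the dual weight enumerator W⊥_C(t) = (v^n/|C|²)·Σ_β (χᵀE_βχ)·t^β, sums over all vectors of d+1 nonnegative integers summing to n. Then W⊥_C(t) = (v^n/|C|)·W_C(P^{-1}t), where W_C(P^{-1}t) denotes the result of substituting s_i ↦ Σ_j (P^{-1})_{i,j}·t_j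 in W_C. -/
open Matrix Finset MvPolynomial

/-- The weight enumerator `W_C(s) = |C|⁻¹ Σ_α (χᵀ A_α χ) s^α` of a subset `C ⊆ V^n`. -/
noncomputable def hamWeightEnum {V : Type} [Fintype V] [DecidableEq V] {d : ℕ}
    (S : AssocScheme d V) (n : ℕ) (Cd : Finset (Fin n → V)) :
    MvPolynomial (Fin (d + 1)) ℂ :=
  (Cd.card : ℂ)⁻¹ •
    ∑ α ∈ Finset.Nat.antidiagonalTuple (d + 1) n,
      MvPolynomial.C (∑ x ∈ Cd, ∑ y ∈ Cd, S.ham n α x y) *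
        ∏ i : Fin (d + 1), MvPolynomial.X i ^ α i

/-- The dual weight enumerator `W⊥_C(t) = (vⁿ/|C|²) Σ_β (χᵀ E_β χ) t^β`. -/
noncomputable def hamDualWeightEnum {V : Type} [Fintype V] [DecidableEq V] {d : ℕ}
    (E : Fin (d + 1) → Matrix V V ℂ) (n : ℕ) (Cd : Finset (Fin n → V)) :
    MvPolynomial (Fin (d + 1)) ℂ :=
  ((Fintype.card V : ℂ) ^ n / (Cd.card : ℂ) ^ 2) •
    ∑ β ∈ Finset.Nat.antidiagonalTuple (d + 1) n,
      MvPolynomial.C (∑ x ∈ Cd, ∑ y ∈ Cd, idemMat E n β x y) *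
        ∏ j : Fin (d + 1), MvPolynomial.X j ^ β j

theorem aux_prod_count {R : Type*} [CommRing R] {m n : ℕ} (f : Fin n → Fin m) (s : Fin m → R) :
    ∏ r, s r ^ (Finset.univ.filter fun j => f j = r).card = ∏ j, s (f j) := by
  rw [← Finset.prod_fiberwise (s := Finset.univ) (g := f)]
  refine Finset.prod_congr rfl fun r _ => ?_
  rw [Finset.prod_congr rfl (g := fun _ => s r), Finset.prod_const]
  intro j hj
  rw [(Finset.mem_filter.1 hj).2]

theorem aux_count_mem {m n : ℕ} (f : Fin n → Fin m) :
    (fun r => (Finset.univ.filter fun j => f j = r).card) ∈ Finset.Nat.antidiagonalTuple m n := by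
  rw [Finset.Nat.mem_antidiagonalTuple]
  have := Finset.card_eq_sum_card_fiberwise (f := f) (s := Finset.univ) (t := Finset.univ)
    (fun _ _ => by simp)
  simpa using this.symm

theorem aux_idem {V : Type} [Fintype V] [DecidableEq V] {d : ℕ}
    (E : Fin (d + 1) → Matrix V V ℂ) (n : ℕ) (x y : Fin n → V) :
    ∑ β ∈ Finset.Nat.antidiagonalTuple (d + 1) n,
      MvPolynomial.C (idemMat E n β x y) * ∏ j : Fin (d + 1), MvPolynomial.X j ^ β j
    = ∏ j, ∑ r, (MvPolynomial.C (E r (x j) (y j)) * MvPolynomial.X r :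
        MvPolynomial (Fin (d + 1)) ℂ) := by
  classical
  rw [Finset.prod_univ_sum]
  simp only [idemMat, Matrix.of_apply, map_sum, Finset.sum_mul, Finset.sum_filter,
    Fintype.piFinset_univ]
  rw [Finset.sum_comm]
  refine Finset.sum_congr rfl fun f _ => ?_
  rw [Finset.sum_eq_single_of_mem _ (aux_count_mem f)]
  · rw [if_pos (fun r => by congr), Finset.prod_mul_distrib, map_prod]
    congr 1
    exact aux_prod_count f (fun r => MvPolynomial.X r)
  · intro b _ hb
    rw [if_neg (fun h => hb ?_)]
    · simp
    · funext r
      rw [← h r]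

theorem aux_rel {V : Type} [Fintype V] [DecidableEq V] {d : ℕ} (S : AssocScheme d V) (a b : V) :
    ∃ r, ∀ i, S.A i a b = if r = i then 1 else 0 := by
  classical
  have h : ∑ i, S.A i a b = 1 := by
    have := congrFun (congrFun S.A_sum a) b
    simpa [Matrix.sum_apply] using this
  have h2 : ∀ i, S.A i a b = if S.A i a b = 1 then 1 else 0 := by
    intro i
    rcases S.entries_zero_or_one i a b with h | h <;> simp [h]
  rw [Finset.sum_congr rfl (fun i _ => h2 i), Finset.sum_boole] at h
  have h3 : (Finset.univ.filter fun i => S.A i a b = 1).card = 1 := by exact_mod_cast h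
  obtain ⟨r, hr⟩ := Finset.card_eq_one.1 h3
  refine ⟨r, fun i => ?_⟩
  have := congrArg (fun s => i ∈ s) hr
  simp at this
  rw [h2 i]
  simp [this, eq_comm]

theorem aux_ham {V : Type} [Fintype V] [DecidableEq V] {d : ℕ} (S : AssocScheme d V)
    (n : ℕ) (x y : Fin n → V) (s : Fin (d + 1) → MvPolynomial (Fin (d + 1)) ℂ) :
    ∑ α ∈ Finset.Nat.antidiagonalTuple (d + 1) n,
      MvPolynomial.C (S.ham n α x y) * ∏ i : Fin (d + 1), s i ^ α i
    = ∏ j, ∑ r, MvPolynomial.C (S.A r (x j) (y j)) * s r := by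
  classical
  choose ρ hρ using aux_rel S
  have hp : S.profile n x y =
      fun r => (Finset.univ.filter fun j => ρ (x j) (y j) = r).card := by
    funext r
    simp only [AssocScheme.profile, hρ]
    congr 1
    ext j
    simp
  rw [Finset.sum_eq_single_of_mem _ (aux_count_mem (fun j => ρ (x j) (y j)))]
  · simp only [AssocScheme.ham, Matrix.of_apply, hp, if_true, map_one, one_mul]
    rw [aux_prod_count (fun j => ρ (x j) (y j)) s]
    refine Finset.prod_congr rfl fun j _ => ?_
    simp [hρ]
  · intro b _ hb
    simp only [AssocScheme.ham, Matrix.of_apply, hp]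
    rw [if_neg (Ne.symm hb)]
    simp

theorem aux_swap {V : Type} {m n : ℕ} (Cd : Finset (Fin n → V))
    (g : (Fin m → ℕ) → (Fin n → V) → (Fin n → V) → ℂ)
    (q : (Fin m → ℕ) → MvPolynomial (Fin m) ℂ) (T : Finset (Fin m → ℕ)) :
    ∑ α ∈ T, MvPolynomial.C (∑ x ∈ Cd, ∑ y ∈ Cd, g α x y) * q α
    = ∑ x ∈ Cd, ∑ y ∈ Cd, ∑ α ∈ T, MvPolynomial.C (g α x y) * q α := by
  simp only [map_sum, Finset.sum_mul]
  rw [Finset.sum_comm]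
  refine Finset.sum_congr rfl fun x _ => ?_
  rw [Finset.sum_comm]

/-- MacWilliams theorem for generalized Hamming schemes:
`W⊥_C(t) = (vⁿ/|C|) W_C(P⁻¹ t)`. -/
theorem macwilliams_generalizedHamming {V : Type} [Fintype V] [DecidableEq V]
    [Nonempty V] {d : ℕ} (S : AssocScheme d V)
    (E : Fin (d + 1) → Matrix V V ℂ)
    (hE0 : E 0 = (Fintype.card V : ℂ)⁻¹ • Matrix.of fun _ _ => 1)
    (hEsum : ∑ j, E j = 1)
    (hEherm : ∀ j, (E j)ᴴ = E j)
    (hEidem : ∀ j, E j * E j = E j)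
    (hEorth : ∀ j k, j ≠ k → E j * E k = 0)
    (P : Matrix (Fin (d + 1)) (Fin (d + 1)) ℂ)
    (hPunit : IsUnit P.det)
    (hAE : ∀ i, S.A i = ∑ j, P j i • E j)
    (n : ℕ) (hn : 1 ≤ n)
    (Cd : Finset (Fin n → V)) (hC : Cd.Nonempty) :
    hamDualWeightEnum E n Cd
      = ((Fintype.card V : ℂ) ^ n / (Cd.card : ℂ)) •
          MvPolynomial.aeval
            (fun i => ∑ j : Fin (d + 1), MvPolynomial.C (P⁻¹ i j) * MvPolynomial.X j)
            (hamWeightEnum S n Cd) := by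
  have key : ∀ a b : V, ∑ r, MvPolynomial.C (S.A r a b) *
      (∑ j : Fin (d + 1), MvPolynomial.C (P⁻¹ r j) * MvPolynomial.X j)
      = ∑ r, (MvPolynomial.C (E r a b) * MvPolynomial.X r :
        MvPolynomial (Fin (d + 1)) ℂ) := by
    intro a b
    simp only [Finset.mul_sum]
    rw [Finset.sum_comm]
    refine Finset.sum_congr rfl fun j _ => ?_
    simp only [← mul_assoc, ← MvPolynomial.C_mul]
    rw [← Finset.sum_mul, ← map_sum]
    congr 2
    have hP : P * P⁻¹ = 1 := Matrix.mul_nonsing_inv P hPunit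
    have h1 : ∀ r, S.A r a b = ∑ k, P k r * E k a b := by
      intro r
      rw [hAE r]
      simp [Matrix.sum_apply]
    simp only [h1, Finset.sum_mul]
    rw [Finset.sum_comm]
    have h2 : ∀ k, ∑ r, P k r * E k a b * P⁻¹ r j = (P * P⁻¹) k j * E k a b := by
      intro k
      rw [Matrix.mul_apply, Finset.sum_mul]
      exact Finset.sum_congr rfl fun r _ => by ring
    simp only [h2, hP, Matrix.one_apply]
    simp
  unfold hamDualWeightEnum hamWeightEnum
  rw [map_smul, smul_smul]
  simp only [map_sum (MvPolynomial.aeval _), map_mul, map_prod, map_pow, MvPolynomial.aeval_X,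
    MvPolynomial.aeval_C, MvPolynomial.algebraMap_eq]
  rw [aux_swap Cd (fun β x y => idemMat E n β x y) (fun β => ∏ j, MvPolynomial.X j ^ β j),
    aux_swap Cd (fun α x y => S.ham n α x y) (fun α => ∏ i,
      (∑ j : Fin (d + 1), MvPolynomial.C (P⁻¹ i j) * MvPolynomial.X j) ^ α i)]
  simp only [aux_idem, aux_ham, key]
  congr 1
  rw [div_mul_eq_mul_div, div_eq_mul_inv, div_eq_mul_inv, sq, mul_inv, mul_assoc]
end

section
/- (MacWilliams theorem for additive codes in translation schemes.) Let Γ be a finite abelian group of order v and ⟨·,·⟩ : Γ × Γ → ℂˣ a symmetric nondegenerate bicharacter (multiplicative in each argument, with ⟨g,·⟩ trivial only for g = 0). Let {N_0, N_1, …, N_d} be a partition of Γ with N_0 = {0} such that the matrices A_i indexed by Γ, with (A_i)_{x,y} = 1 iff y − x ∈ N_i, form an association scheme, and suppose there is an invertible (d+1)×(d+1) complex matrix P such that for every j, every h ∈ N_j and every i, Σ_{g ∈ N_i} ⟨h,g⟩ = P_{j,i}. Let n ≥ 1 and let C be a subgroup of Γ^n. Define, for x, y ∈ Γ^n, h(x,y)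 as the vector whose r-th entry is #{j : y_j − x_j ∈ N_r}, the weight enumerator W_C(s) = (1/|C|)·Σ_{x,y ∈ C} s^{h(x,y)}, and the dual code C⊥ = {y ∈ Γ^n : Π_{j=1}^{n} ⟨x_j, y_j⟩ = 1 for all x ∈ C}. Then W_{C⊥}(t) = (v^n/|C|)·W_C(P^{-1}t), where W_C(P^{-1}t) denotes substituting s_i ↦ Σ_j (P^{-1})_{i,j}·t_j in W_C. -/
open Matrix Finset MvPolynomial

open Classical in
/-- The weight enumerator `W_C(s) = |C|⁻¹ Σ_{x,y ∈ C} s^{h(x,y)}` of a code `C ⊆ Γⁿ`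
for the translation scheme with classes `N_0, …, N_d`. -/
noncomputable def transWeightEnum {Γ : Type} [AddCommGroup Γ] [Fintype Γ] {d : ℕ}
    (N : Fin (d + 1) → Finset Γ) (n : ℕ) (Cd : Finset (Fin n → Γ)) :
    MvPolynomial (Fin (d + 1)) ℂ :=
  (Cd.card : ℂ)⁻¹ •
    ∑ x ∈ Cd, ∑ y ∈ Cd,
      ∏ r : Fin (d + 1),
        MvPolynomial.X r ^ (Finset.univ.filter fun j : Fin n => y j - x j ∈ N r).card

open Classical in
/-- The dual code `C⊥ = {y : Π_j ⟨x_j, y_j⟩ = 1 for all x ∈ C}`. -/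
noncomputable def dualCode {Γ : Type} [AddCommGroup Γ] [Fintype Γ]
    (χ : Γ → Γ → ℂ) (n : ℕ) (Cd : Finset (Fin n → Γ)) : Finset (Fin n → Γ) :=
  Finset.univ.filter fun y => ∀ x ∈ Cd, ∏ j, χ (x j) (y j) = 1

theorem aux_orth {G : Type} [AddCommGroup G] (D : Finset G)
    (h0 : (0 : G) ∈ D) (hs : ∀ x ∈ D, ∀ y ∈ D, x - y ∈ D) (φ : G → ℂ)
    (hadd : ∀ a b, φ (a + b) = φ a * φ b) (hn : ¬ ∀ x ∈ D, φ x = 1) :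
    ∑ x ∈ D, φ x = 0 := by
  push Not at hn
  obtain ⟨a, ha, hne⟩ := hn
  have key : ∑ x ∈ D, φ x = φ a * ∑ x ∈ D, φ x := by
    rw [Finset.mul_sum]
    refine Finset.sum_bij' (fun x _ => x - a) (fun x _ => x + a) ?_ ?_ ?_ ?_ ?_
    · intro x hx; exact hs x hx a ha
    · intro x hx
      have h1 := hs x hx (0 - a) (hs 0 h0 a ha)
      simpa using h1
    · intro x _; simp
    · intro x _; simp
    · intro x _; rw [← hadd]; simp
  have h2 : (φ a - 1) * ∑ x ∈ D, φ x = 0 := by rw [sub_mul, one_mul, ← key, sub_self]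
  rcases mul_eq_zero.mp h2 with h | h
  · exact absurd (sub_eq_zero.mp h) hne
  · exact h

open Classical in
theorem aux_card {G : Type} [AddCommGroup G] [Fintype G] (ψ : G → G → ℂ)
    (hadd : ∀ g h h', ψ g (h + h') = ψ g h * ψ g h')
    (hzero : ∀ g, ψ g 0 = 1) (hsymm : ∀ g h, ψ g h = ψ h g)
    (hnd : ∀ g, (∀ h, ψ g h = 1) → g = 0) (D : Finset G)
    (h0 : (0 : G) ∈ D) (hs : ∀ x ∈ D, ∀ y ∈ D, x - y ∈ D) :
    D.card * (Finset.univ.filter fun y => ∀ x ∈ D, ψ x y = 1).card = Fintype.card G := by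
  have h1 : ∑ x ∈ D, ∑ y, ψ x y = (Fintype.card G : ℂ) := by
    rw [Finset.sum_eq_single 0]
    · simp [hsymm 0, hzero]
    · intro b _ hb
      apply aux_orth Finset.univ (by simp) (by simp) _ (hadd b)
      intro h
      exact hb (hnd b fun y => h y (by simp))
    · intro h; exact absurd h0 h
  rw [Finset.sum_comm] at h1
  have h2 : ∀ y, ∑ x ∈ D, ψ x y = if (∀ x ∈ D, ψ x y = 1) then (D.card : ℂ) else 0 := by
    intro y
    split_ifs with h
    · rw [Finset.sum_congr rfl h]; simp
    · refine aux_orth D h0 hs (fun x => ψ x y) ?_ h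
      intro a b
      simp only [hsymm _ y]
      exact hadd y a b
  simp only [h2, ← Finset.sum_filter, Finset.sum_const, nsmul_eq_mul] at h1
  rw [mul_comm]
  exact_mod_cast h1

open Classical in
theorem aux_dual_sub {G : Type} [AddCommGroup G] [Fintype G] (ψ : G → G → ℂ)
    (hadd : ∀ g h h', ψ g (h + h') = ψ g h * ψ g h')
    (hzero : ∀ g, ψ g 0 = 1) (D : Finset G) :
    (0 : G) ∈ (Finset.univ.filter fun y => ∀ x ∈ D, ψ x y = 1) ∧
    ∀ a ∈ (Finset.univ.filter fun y => ∀ x ∈ D, ψ x y = 1),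
    ∀ b ∈ (Finset.univ.filter fun y => ∀ x ∈ D, ψ x y = 1),
     a - b ∈ (Finset.univ.filter fun y => ∀ x ∈ D, ψ x y = 1) := by
  simp only [Finset.mem_filter, Finset.mem_univ, true_and]
  refine ⟨fun x _ => hzero x, fun a ha b hb x hx => ?_⟩
  have h := hadd x (a - b) b
  rw [sub_add_cancel, ha x hx, hb x hx, mul_one] at h
  exact h.symm

open Classical in
theorem aux_dual_dual {G : Type} [AddCommGroup G] [Fintype G] (ψ : G → G → ℂ)
    (hadd : ∀ g h h', ψ g (h + h') = ψ g h * ψ g h')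
    (hzero : ∀ g, ψ g 0 = 1) (hsymm : ∀ g h, ψ g h = ψ h g)
    (hnd : ∀ g, (∀ h, ψ g h = 1) → g = 0) (D E : Finset G)
    (h0 : (0 : G) ∈ D) (hs : ∀ x ∈ D, ∀ y ∈ D, x - y ∈ D)
    (hE : E = Finset.univ.filter fun y => ∀ x ∈ D, ψ x y = 1) :
    (Finset.univ.filter fun y => ∀ x ∈ E, ψ x y = 1) = D := by
  have hc := aux_card ψ hadd hzero hsymm hnd D h0 hs
  obtain ⟨e0, es⟩ := aux_dual_sub ψ hadd hzero D
  rw [← hE] at hc e0 es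
  have hc2 := aux_card ψ hadd hzero hsymm hnd E e0 es
  symm
  apply Finset.eq_of_subset_of_card_le
  · intro x hx
    simp only [Finset.mem_filter, Finset.mem_univ, true_and]
    intro y hy
    rw [hE] at hy
    rw [hsymm]
    exact (Finset.mem_filter.mp hy).2 x hx
  · have hp : 0 < E.card := Finset.card_pos.mpr ⟨0, e0⟩
    apply le_of_eq
    apply Nat.eq_of_mul_eq_mul_left hp
    rw [hc2, ← hc, mul_comm]

theorem aux_mem_dual {Γ : Type} [AddCommGroup Γ] [Fintype Γ]
    (χ : Γ → Γ → ℂ) (n : ℕ) (Cd : Finset (Fin n → Γ)) (y : Fin n → Γ) :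
    y ∈ dualCode χ n Cd ↔ ∀ x ∈ Cd, ∏ j, χ (x j) (y j) = 1 := by
  classical
  simp [dualCode]

open Classical in
theorem aux_all {G : Type} [AddCommGroup G] [Fintype G] (ψ : G → G → ℂ)
    (hadd : ∀ g h h', ψ g (h + h') = ψ g h * ψ g h')
    (hzero : ∀ g, ψ g 0 = 1) (hsymm : ∀ g h, ψ g h = ψ h g)
    (hnd : ∀ g, (∀ h, ψ g h = 1) → g = 0) (D E : Finset G)
    (h0 : (0 : G) ∈ D) (hs : ∀ x ∈ D, ∀ y ∈ D, x - y ∈ D)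
    (hE : ∀ y, y ∈ E ↔ ∀ x ∈ D, ψ x y = 1) :
    D.card * E.card = Fintype.card G ∧ (∀ y, (∀ x ∈ E, ψ x y = 1) ↔ y ∈ D) ∧
    (0 : G) ∈ E ∧ ∀ x ∈ E, ∀ y ∈ E, x - y ∈ E := by
  have hE' : E = Finset.univ.filter fun y => ∀ x ∈ D, ψ x y = 1 := by
    ext y; rw [hE]; simp
  have hc := aux_card ψ hadd hzero hsymm hnd D h0 hs
  have hdd := aux_dual_dual ψ hadd hzero hsymm hnd D E h0 hs hE'
  have hds := aux_dual_sub ψ hadd hzero D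
  rw [← hE'] at hc hds
  refine ⟨hc, fun y => ?_, hds⟩
  conv_rhs => rw [← hdd]
  simp

theorem aux_enum {Γ : Type} [AddCommGroup Γ] [Fintype Γ] {d : ℕ}
    (N : Fin (d + 1) → Finset Γ) (cl : Γ → Fin (d + 1)) (hcl : ∀ g r, g ∈ N r ↔ cl g = r)
    (n : ℕ) (D : Finset (Fin n → Γ))
    (h0 : (0 : Fin n → Γ) ∈ D) (hs : ∀ x ∈ D, ∀ y ∈ D, x - y ∈ D) :
    transWeightEnum N n D = ∑ x ∈ D, ∏ j, (X (cl (x j)) : MvPolynomial (Fin (d + 1)) ℂ) := by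
  classical
  unfold transWeightEnum
  have h1 : ∀ z : Fin n → Γ, ∏ r : Fin (d + 1),
        (X r : MvPolynomial (Fin (d + 1)) ℂ) ^ (Finset.univ.filter fun j : Fin n => z j ∈ N r).card
        = ∏ j, X (cl (z j)) := by
    intro z
    rw [← Finset.prod_fiberwise (s := Finset.univ) (g := fun j => cl (z j))]
    refine Finset.prod_congr rfl fun r _ => ?_
    rw [Finset.prod_congr rfl (g := fun _ => X r)]
    · rw [Finset.prod_const]; simp only [hcl]
    · intro j hj; rw [(Finset.mem_filter.mp hj).2]
  have h2 : ∀ x ∈ D, ∑ y ∈ D, ∏ r : Fin (d + 1),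
        (X r : MvPolynomial (Fin (d + 1)) ℂ) ^
          (Finset.univ.filter fun j : Fin n => y j - x j ∈ N r).card
        = ∑ y ∈ D, ∏ j, X (cl (y j)) := by
    intro x hx
    refine Finset.sum_bij' (fun y _ => y - x) (fun y _ => y + x) ?_ ?_ ?_ ?_ ?_
    · intro y hy; exact hs y hy x hx
    · intro y hy
      have h1 := hs y hy (0 - x) (hs 0 h0 x hx)
      simpa using h1
    · intro x _; simp
    · intro x _; simp
    · intro y _
      exact h1 (y - x)
  have hD : (D.card : ℂ) ≠ 0 := by
    exact_mod_cast (Finset.card_pos.mpr ⟨0, h0⟩).ne'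
  have h3 := Finset.sum_congr (rfl : D = D) h2
  rw [Finset.sum_const, ← Nat.cast_smul_eq_nsmul ℂ] at h3
  calc _ = (D.card : ℂ)⁻¹ • ((D.card : ℂ) • ∑ y ∈ D, ∏ j, (X (cl (y j)) : MvPolynomial (Fin (d + 1)) ℂ)) := by
        rw [← h3]
    _ = _ := by rw [smul_smul, inv_mul_cancel₀ hD, one_smul]

set_option maxHeartbeats 2000000 in
/-- MacWilliams theorem for additive codes in translation schemes:
`W_{C⊥}(t) = (vⁿ/|C|) W_C(P⁻¹ t)`. -/
theorem macwilliams_translation_scheme {Γ : Type} [AddCommGroup Γ] [Fintype Γ]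
    [DecidableEq Γ] {d : ℕ}
    (χ : Γ → Γ → ℂ)
    (hχadd : ∀ g h h', χ g (h + h') = χ g h * χ g h')
    (hχzero : ∀ g, χ g 0 = 1)
    (hχsymm : ∀ g h, χ g h = χ h g)
    (hχnondeg : ∀ g, (∀ h, χ g h = 1) → g = 0)
    (N : Fin (d + 1) → Finset Γ)
    (hN0 : N 0 = {0})
    (hNdisj : ∀ i j, i ≠ j → Disjoint (N i) (N j))
    (hNcover : ∀ g, ∃ i, g ∈ N i)
    (S : AssocScheme d Γ)
    (hSA : ∀ i, S.A i = Matrix.of fun x y => if y - x ∈ N i then (1 : ℂ) else 0)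
    (P : Matrix (Fin (d + 1)) (Fin (d + 1)) ℂ)
    (hPunit : IsUnit P.det)
    (hP : ∀ j, ∀ h ∈ N j, ∀ i, ∑ g ∈ N i, χ h g = P j i)
    (n : ℕ) (hn : 1 ≤ n)
    (Cd : Finset (Fin n → Γ))
    (hC0 : (0 : Fin n → Γ) ∈ Cd)
    (hCsub : ∀ x ∈ Cd, ∀ y ∈ Cd, x - y ∈ Cd) :
    transWeightEnum N n (dualCode χ n Cd)
      = ((Fintype.card Γ : ℂ) ^ n / (Cd.card : ℂ)) •
          MvPolynomial.aeval
            (fun i => ∑ j : Fin (d + 1), MvPolynomial.C (P⁻¹ i j) * MvPolynomial.X j)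
            (transWeightEnum N n Cd) := by
  classical
  choose cl hcl0 using hNcover
  have hcl : ∀ g r, g ∈ N r ↔ cl g = r := by
    intro g r
    constructor
    · intro hg
      by_contra hne
      exact Finset.disjoint_left.mp (hNdisj _ _ hne) (hcl0 g) hg
    · rintro rfl; exact hcl0 g
  set ψ : (Fin n → Γ) → (Fin n → Γ) → ℂ := fun x y => ∏ j, χ (x j) (y j) with hψ
  have padd : ∀ g h h', ψ g (h + h') = ψ g h * ψ g h' := by
    intro g h h'
    simp [hψ, hχadd, Finset.prod_mul_distrib]
  have pzero : ∀ g, ψ g 0 = 1 := by intro g; simp [hψ, hχzero]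
  have psymm : ∀ g h, ψ g h = ψ h g := by
    intro g h
    exact Finset.prod_congr rfl fun j _ => hχsymm _ _
  have pnd : ∀ g, (∀ h, ψ g h = 1) → g = 0 := by
    intro g hg
    funext i
    apply hχnondeg
    intro h
    have h1 := hg (Pi.single i h)
    simp only [hψ] at h1
    rw [Finset.prod_eq_single i] at h1
    · simpa using h1
    · intro j _ hj; simp [hj, hχzero]
    · simp
  set E := dualCode χ n Cd with hEdef
  have hE : ∀ y, y ∈ E ↔ ∀ x ∈ Cd, ψ x y = 1 := by
    intro y
    exact aux_mem_dual χ n Cd y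
  obtain ⟨hc, hdd, e0, es⟩ := aux_all ψ padd pzero psymm pnd Cd E hC0 hCsub hE
  have hCne : (Cd.card : ℂ) ≠ 0 := by
    exact_mod_cast (Finset.card_pos.mpr ⟨0, hC0⟩).ne'
  have hcoef : (Fintype.card Γ : ℂ) ^ n / (Cd.card : ℂ) = E.card := by
    rw [div_eq_iff hCne]
    have : Fintype.card (Fin n → Γ) = Fintype.card Γ ^ n := by simp
    rw [this] at hc
    rw [mul_comm]
    exact_mod_cast hc.symm
  rw [hcoef, aux_enum N cl hcl n Cd hC0 hCsub, aux_enum N cl hcl n E e0 es]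
  simp only [map_sum, map_prod, aeval_X]
  set u : Fin (d + 1) → MvPolynomial (Fin (d + 1)) ℂ :=
    fun i => ∑ j : Fin (d + 1), MvPolynomial.C (P⁻¹ i j) * MvPolynomial.X j with hu
  have hX : ∀ h, (X (cl h) : MvPolynomial (Fin (d + 1)) ℂ) = ∑ g, C (χ h g) * u (cl g) := by
    intro h
    have s1 : ∑ g, C (χ h g) * u (cl g) = ∑ i, C (P (cl h) i) * u i := by
      rw [← Finset.sum_fiberwise (s := Finset.univ) (g := cl)]
      refine Finset.sum_congr rfl fun i _ => ?_
      rw [← hP (cl h) h (hcl0 h) i, map_sum, Finset.sum_mul]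
      have : N i = Finset.univ.filter fun g => cl g = i := by ext g; simp [hcl]
      rw [this]
      refine Finset.sum_congr rfl fun g hg => ?_
      rw [(Finset.mem_filter.mp hg).2]
    rw [s1]
    simp only [hu, Finset.mul_sum]
    rw [Finset.sum_comm]
    have s2 : ∀ j, ∑ i, C (P (cl h) i) * (C (P⁻¹ i j) * (X j : MvPolynomial (Fin (d + 1)) ℂ))
        = C ((1 : Matrix (Fin (d + 1)) (Fin (d + 1)) ℂ) (cl h) j) * X j := by
      intro j
      rw [← Matrix.mul_nonsing_inv P hPunit, Matrix.mul_apply, map_sum, Finset.sum_mul]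
      refine Finset.sum_congr rfl fun i _ => ?_
      rw [map_mul, mul_assoc]
    simp only [s2]
    rw [Finset.sum_eq_single (cl h)]
    · simp
    · intro j _ hj; simp [Matrix.one_apply_ne hj.symm]
    · simp
  have h1 : ∀ h : Fin n → Γ, ∏ j, (X (cl (h j)) : MvPolynomial (Fin (d + 1)) ℂ)
      = ∑ x : Fin n → Γ, C (ψ h x) * ∏ j, u (cl (x j)) := by
    intro h
    simp only [hX]
    rw [Finset.prod_univ_sum]
    simp [hψ, Finset.prod_mul_distrib]
  simp only [h1]
  rw [Finset.sum_comm]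
  have h2 : ∀ x, ∑ h ∈ E, C (ψ h x) * ∏ j, u (cl (x j))
      = if x ∈ Cd then (E.card : ℂ) • ∏ j, u (cl (x j)) else 0 := by
    intro x
    rw [← Finset.sum_mul, ← map_sum]
    split_ifs with h
    · rw [Finset.sum_congr rfl ((hdd x).2 h), smul_eq_C_mul]; simp
    · have := aux_orth E e0 es (fun h => ψ h x) (by
        intro a b
        simp only [psymm _ x]
        exact padd x a b) (fun h' => h ((hdd x).1 h'))
      rw [this]; simp
  simp only [h2]
  rw [← Finset.sum_filter, Finset.smul_sum, Finset.filter_univ_mem]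
end

section
/- (Classical MacWilliams theorem.) Let q be a prime power, n ≥ 1, and let C be a linear code, i.e., a linear subspace of GF(q)^n. Let the dual code be C⊥ = {y ∈ GF(q)^n : Σ_{j=1}^{n} x_j·y_j = 0 for all x ∈ C}, and let the weight enumerator be W_C(x,y) = Σ_{c ∈ C} x^{n − wt(c)}·y^{wt(c)}, where wt(c) is the number of nonzero coordinates of c. Then W_{C⊥}(x,y) = (1/|C|)·W_C(x + (q−1)y, x − y). -/
open Finset MvPolynomial

open Classical in
/-- The Hamming weight enumerator `W_C(x,y) = Σ_{c ∈ C} x^{n-wt(c)} y^{wt(c)}`,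
a polynomial in the two variables `X 0` and `X 1`. -/
noncomputable def hammingWeightEnum {F : Type} [Field F] [Fintype F] (n : ℕ)
    (Cd : Finset (Fin n → F)) : MvPolynomial (Fin 2) ℂ :=
  ∑ c ∈ Cd,
    MvPolynomial.X 0 ^ (n - (Finset.univ.filter fun j => c j ≠ 0).card) *
      MvPolynomial.X 1 ^ (Finset.univ.filter fun j => c j ≠ 0).card

open Classical in
/-- The dual code `C⊥ = {y : Σ_j x_j y_j = 0 for all x ∈ C}`. -/
noncomputable def dualLinearCode {F : Type} [Field F] [Fintype F] (n : ℕ)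
    (Cd : Finset (Fin n → F)) : Finset (Fin n → F) :=
  Finset.univ.filter fun y => ∀ x ∈ Cd, ∑ j, x j * y j = 0

open Classical in
lemma mono_aux {F R : Type} [Field F] [CommRing R] (n : ℕ) (c : Fin n → F) (a b : R) :
    a ^ (n - (Finset.univ.filter fun j => c j ≠ 0).card) *
      b ^ (Finset.univ.filter fun j => c j ≠ 0).card = ∏ j, (if c j = 0 then a else b) := by
  rw [Finset.prod_ite, Finset.prod_const, Finset.prod_const]
  have h := Finset.card_filter_add_card_filter_not (s := (Finset.univ : Finset (Fin n)))
    (fun j => c j = 0)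
  rw [Finset.card_univ, Fintype.card_fin] at h
  congr 2
  simp only [ne_eq]
  omega

lemma exists_prim (F : Type) [Field F] [Fintype F] : ∃ ψ : AddChar F ℂ, ψ.IsPrimitive := by
  obtain ⟨ψ, hψ⟩ := (AddChar.exists_apply_ne_zero (α := F) (a := 1)).2 one_ne_zero
  refine ⟨ψ, AddChar.IsPrimitive.of_ne_one ?_⟩
  rintro rfl
  simp at hψ

open Classical in
lemma local_aux {F R : Type} [Field F] [Fintype F] [CommRing R] [Algebra ℂ R] (ψ : AddChar F ℂ)
    (hψ : ψ.IsPrimitive) (x : F) (a b : R) :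
    ∑ t, algebraMap ℂ R (ψ (x * t)) * (if t = 0 then a else b) =
      if x = 0 then a + algebraMap ℂ R ((Fintype.card F : ℂ) - 1) * b else a - b := by
  have h1 : ∀ t : F, algebraMap ℂ R (ψ (x * t)) * (if t = 0 then a else b) =
      algebraMap ℂ R (ψ (t * x)) * b + if t = 0 then a - b else 0 := by
    intro t
    by_cases ht : t = 0
    · simp [ht]
    · simp [ht, mul_comm]
  rw [Finset.sum_congr rfl (fun t _ => h1 t), Finset.sum_add_distrib, ← Finset.sum_mul, ← map_sum,
    AddChar.sum_mulShift x hψ]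
  by_cases hx : x = 0
  · simp [hx]; ring
  · simp [hx]

lemma sum_code {F : Type} [Field F] [Fintype F] (n : ℕ) (Cd : Finset (Fin n → F))
    (hC0 : (0 : Fin n → F) ∈ Cd)
    (hCsub : ∀ x ∈ Cd, ∀ y ∈ Cd, x - y ∈ Cd)
    (hCsmul : ∀ (a : F), ∀ x ∈ Cd, a • x ∈ Cd) (ψ : AddChar F ℂ) (hψ : ψ.IsPrimitive)
    (v : Fin n → F) [Decidable (v ∈ dualLinearCode n Cd)] :
    ∑ x ∈ Cd, ψ (∑ j, x j * v j) = if v ∈ dualLinearCode n Cd then (Cd.card : ℂ) else 0 := by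
  split_ifs with h
  · have h' : ∀ x ∈ Cd, ∑ j, x j * v j = 0 := by simpa [dualLinearCode] using h
    rw [Finset.sum_congr rfl (g := fun _ => (1 : ℂ)) (fun x hx => by rw [h' x hx, AddChar.map_zero_eq_one])]
    simp
  · have h' : ∃ x ∈ Cd, ∑ j, x j * v j ≠ 0 := by simpa [dualLinearCode] using h
    obtain ⟨y, hy, hyv⟩ := h'
    have hne := hψ hyv
    obtain ⟨t, ht⟩ := (AddChar.ne_one_iff).1 hne
    rw [AddChar.mulShift_apply] at ht
    have hz := hCsmul t y hy
    have hzv : ∑ j, (t • y) j * v j = (∑ j, y j * v j) * t := by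
      rw [Finset.sum_mul]
      exact Finset.sum_congr rfl (fun j _ => by simp; ring)
    have hadd : ∀ x ∈ Cd, x + t • y ∈ Cd := fun x hx => by
      have := hCsub x hx _ (hCsub 0 hC0 _ hz)
      simpa using this
    have key : ∑ x ∈ Cd, ψ (∑ j, x j * v j) =
        ∑ x ∈ Cd, ψ (∑ j, x j * v j) * ψ ((∑ j, y j * v j) * t) := by
      symm
      refine Finset.sum_bij' (fun x _ => x + t • y) (fun x _ => x - t • y) hadd
        (fun x hx => hCsub x hx _ hz) (by simp) (by simp) ?_
      intro x hx
      rw [← AddChar.map_add_eq_mul, ← hzv, ← Finset.sum_add_distrib]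
      simp only [Pi.add_apply, add_mul]
    rw [← Finset.sum_mul] at key
    have : (∑ x ∈ Cd, ψ (∑ j, x j * v j)) * (ψ ((∑ j, y j * v j) * t) - 1) = 0 := by
      rw [mul_sub, ← key]; ring
    exact (mul_eq_zero.1 this).resolve_right (sub_ne_zero.2 ht)

/-- classical MacWilliams theorem. For a linear code `C` over the
field `GF(q)`, `W_{C⊥}(x,y) = |C|⁻¹ W_C(x + (q-1)y, x - y)`. -/
theorem macwilliams_classical {F : Type} [Field F] [Fintype F] [DecidableEq F]
    (n : ℕ) (hn : 1 ≤ n)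
    (Cd : Finset (Fin n → F))
    (hC0 : (0 : Fin n → F) ∈ Cd)
    (hCsub : ∀ x ∈ Cd, ∀ y ∈ Cd, x - y ∈ Cd)
    (hCsmul : ∀ (a : F), ∀ x ∈ Cd, a • x ∈ Cd) :
    hammingWeightEnum n (dualLinearCode n Cd)
      = (Cd.card : ℂ)⁻¹ •
          MvPolynomial.aeval
            ![MvPolynomial.X 0 + MvPolynomial.C ((Fintype.card F : ℂ) - 1) * MvPolynomial.X 1,
              MvPolynomial.X 0 - MvPolynomial.X 1]
            (hammingWeightEnum n Cd) := by
  clear ‹DecidableEq F›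
  classical
  obtain ⟨ψ, hψ⟩ := exists_prim F
  have hcard : (Cd.card : ℂ) ≠ 0 := Nat.cast_ne_zero.2 (Finset.card_ne_zero_of_mem hC0)
  rw [eq_inv_smul_iff₀ hcard]
  have hR : ∀ x : Fin n → F,
      ∑ v : Fin n → F, algebraMap ℂ (MvPolynomial (Fin 2) ℂ) (ψ (∑ j, x j * v j)) *
        ∏ j, (if v j = 0 then (X 0 : MvPolynomial (Fin 2) ℂ) else X 1) =
      ∏ j, (if x j = 0 then (X 0 : MvPolynomial (Fin 2) ℂ) +
        algebraMap ℂ _ ((Fintype.card F : ℂ) - 1) * X 1 else X 0 - X 1) := by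
    intro x
    rw [Finset.prod_congr rfl (fun j _ => (local_aux ψ hψ (x j) _ _).symm),
      Fintype.prod_sum]
    refine Finset.sum_congr rfl (fun v _ => ?_)
    rw [Finset.prod_mul_distrib, ← map_prod]
    congr 2
    exact map_prod ψ.toMonoidHom (fun j => Multiplicative.ofAdd (x j * v j)) Finset.univ
  have hL : aeval ![X 0 + C ((Fintype.card F : ℂ) - 1) * X 1, X 0 - X 1]
      (hammingWeightEnum n Cd) = ∑ x ∈ Cd,
      ∏ j, (if x j = 0 then (X 0 : MvPolynomial (Fin 2) ℂ) +
        algebraMap ℂ _ ((Fintype.card F : ℂ) - 1) * X 1 else X 0 - X 1) := by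
    unfold hammingWeightEnum
    rw [map_sum]
    refine Finset.sum_congr rfl (fun x _ => ?_)
    rw [← mono_aux, map_mul, map_pow, map_pow, aeval_X, aeval_X]
    rfl
  rw [hL, ← Finset.sum_congr rfl (fun x _ => hR x), Finset.sum_comm]
  simp_rw [← Finset.sum_mul, ← map_sum, sum_code n Cd hC0 hCsub hCsmul ψ hψ]
  unfold hammingWeightEnum
  simp_rw [mono_aux]
  rw [Finset.smul_sum, ← Finset.sum_filter_add_sum_filter_not Finset.univ
    (fun v => v ∈ dualLinearCode n Cd)]
  rw [Finset.sum_eq_zero (s := Finset.univ.filter fun v => ¬ v ∈ dualLinearCode n Cd), add_zero]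
  · rw [Finset.filter_univ_mem]
    refine Finset.sum_congr rfl (fun v hv => ?_)
    rw [if_pos hv, Algebra.smul_def]
  · intro v hv
    rw [if_neg (Finset.mem_filter.1 hv).2, map_zero, zero_mul]
end

section
/- (MacWilliams theorem for the complete weight enumerator over ℤ/4.) Let n ≥ 1 and let C be a subgroup of (ℤ/4)^n. Then, as polynomials over ℂ, cwe_{C⊥}(s,t,u,v) = (1/|C|)·cwe_C(s+t+u+v, s+it−u−iv, s−t+u−v, s−it−u+iv), where i denotes the imaginary unit. -/
open Finset MvPolynomial

/-- `n_r(x)`: the number of coordinates of `x ∈ (ℤ/4)ⁿ` equal to `r` (mod 4). -/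
def countCoord (n : ℕ) (x : Fin n → ZMod 4) (r : ℕ) : ℕ :=
  (Finset.univ.filter fun j => x j = (r : ZMod 4)).card

/-- The complete weight enumerator `cwe_C(s,t,u,v) = Σ_{x ∈ C} s^{n₀} t^{n₁} u^{n₂} v^{n₃}`,
in the variables `X 0, X 1, X 2, X 3`. -/
noncomputable def cwe (n : ℕ) (Cd : Finset (Fin n → ZMod 4)) : MvPolynomial (Fin 4) ℂ :=
  ∑ x ∈ Cd, ∏ r : Fin 4, MvPolynomial.X r ^ countCoord n x r

/-- The dual code `C⊥ = {y : Σ_j x_j y_j = 0 in ℤ/4 for all x ∈ C}`. -/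
def dualZ4Code (n : ℕ) (Cd : Finset (Fin n → ZMod 4)) : Finset (Fin n → ZMod 4) :=
  Finset.univ.filter fun y => ∀ x ∈ Cd, ∑ j, x j * y j = 0

/-- The additive character `a ↦ i ^ a` of `ℤ/4`. -/
noncomputable def chiZ4 (a : ZMod 4) : ℂ := Complex.I ^ a.val

theorem chiZ4_zero : chiZ4 0 = 1 := by simp [chiZ4]

theorem chiZ4_add (a b : ZMod 4) : chiZ4 (a + b) = chiZ4 a * chiZ4 b := by
  unfold chiZ4
  rw [← pow_add, ZMod.val_add, ← pow_mod_orderOf, ← pow_mod_orderOf Complex.I (a.val + b.val)]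
  have h : orderOf Complex.I ∣ 4 := orderOf_dvd_of_pow_eq_one Complex.I_pow_four
  rw [Nat.mod_mod_of_dvd _ h]

theorem chiZ4_eq_one (a : ZMod 4) (h : chiZ4 a = 1) : a = 0 := by
  unfold chiZ4 at h
  have hlt := ZMod.val_lt a
  rw [← ZMod.val_eq_zero]
  interval_cases a.val
  · rfl
  · simp [Complex.ext_iff] at h
  · norm_num [Complex.ext_iff] at h
  · simp [Complex.ext_iff, pow_succ] at h

theorem chiZ4_sum {n : ℕ} (f : Fin n → ZMod 4) :
    chiZ4 (∑ j, f j) = ∏ j, chiZ4 (f j) := by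
  have : ∀ s : Finset (Fin n), chiZ4 (∑ j ∈ s, f j) = ∏ j ∈ s, chiZ4 (f j) := by
    intro s
    induction s using Finset.induction_on with
    | empty => simp [chiZ4_zero]
    | insert a s ha ih => rw [sum_insert ha, prod_insert ha, chiZ4_add, ih]
  exact this _

theorem prod_count_fin {M : Type*} [CommMonoid M] (n : ℕ) (x : Fin n → Fin 4) (g : Fin 4 → M) :
    ∏ r : Fin 4, g r ^ (univ.filter fun j => x j = r).card = ∏ j, g (x j) := by
  rw [← Finset.prod_fiberwise_of_maps_to (s := univ) (t := (univ : Finset (Fin 4)))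
    (g := x) (fun _ _ => mem_univ _)]
  refine prod_congr rfl fun r _ => ?_
  rw [prod_congr rfl (g := fun _ => g r), prod_const]
  intro j hj
  rw [(mem_filter.1 hj).2]

theorem prod_countCoord {M : Type*} [CommMonoid M] (n : ℕ) (x : Fin n → ZMod 4) (g : Fin 4 → M) :
    ∏ r : Fin 4, g r ^ countCoord n x r = ∏ j, g (x j : Fin 4) := by
  refine Eq.trans (prod_congr rfl fun r _ => ?_) (prod_count_fin n x g)
  unfold countCoord
  have hr : ((r : ℕ) : ZMod 4) = (r : Fin 4) := by fin_cases r <;> rfl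
  congr 2
  ext j
  simp only [mem_filter, mem_univ, true_and]
  exact ⟨fun h => h.trans hr, fun h => Eq.trans h hr.symm⟩

theorem sum_chiZ4 (n : ℕ) (Cd : Finset (Fin n → ZMod 4))
    (hC0 : (0 : Fin n → ZMod 4) ∈ Cd)
    (hCsub : ∀ x ∈ Cd, ∀ y ∈ Cd, x - y ∈ Cd) (y : Fin n → ZMod 4) :
    ∑ x ∈ Cd, chiZ4 (∑ j, x j * y j) = if y ∈ dualZ4Code n Cd then (Cd.card : ℂ) else 0 := by
  split_ifs with h
  · simp only [dualZ4Code, mem_filter, mem_univ, true_and] at h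
    rw [sum_congr rfl (g := fun _ => (1 : ℂ)) (fun x hx => by rw [h x hx, chiZ4_zero])]
    simp
  · simp only [dualZ4Code, mem_filter, mem_univ, true_and, not_forall] at h
    obtain ⟨z, hz, hzy⟩ := h
    have hneg : ∀ x ∈ Cd, x + z ∈ Cd := fun x hx => by
      have := hCsub x hx _ (hCsub 0 hC0 z hz)
      simpa using this
    have key : ∑ x ∈ Cd, chiZ4 (∑ j, x j * y j)
        = (∑ x ∈ Cd, chiZ4 (∑ j, x j * y j)) * chiZ4 (∑ j, z j * y j) := by
      rw [sum_mul]
      symm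
      refine sum_bij' (fun x _ => x + z) (fun x _ => x - z) hneg
        (fun x hx => hCsub x hx z hz) (by simp) (by simp) ?_
      intro x _
      rw [← chiZ4_add, ← sum_add_distrib]
      simp only [Pi.add_apply, add_mul]
    have hne : chiZ4 (∑ j, z j * y j) ≠ 1 := fun h => hzy (chiZ4_eq_one _ h)
    have : (∑ x ∈ Cd, chiZ4 (∑ j, x j * y j)) * (chiZ4 (∑ j, z j * y j) - 1) = 0 := by
      rw [mul_sub, ← key]; ring
    exact (mul_eq_zero.1 this).resolve_right (sub_ne_zero.2 hne)

theorem subst_eq_sum (b : ZMod 4) :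
    (![MvPolynomial.X 0 + MvPolynomial.X 1 + MvPolynomial.X 2 + MvPolynomial.X 3,
              MvPolynomial.X 0 + MvPolynomial.C Complex.I * MvPolynomial.X 1
                - MvPolynomial.X 2 - MvPolynomial.C Complex.I * MvPolynomial.X 3,
              MvPolynomial.X 0 - MvPolynomial.X 1 + MvPolynomial.X 2 - MvPolynomial.X 3,
              MvPolynomial.X 0 - MvPolynomial.C Complex.I * MvPolynomial.X 1
                - MvPolynomial.X 2 + MvPolynomial.C Complex.I * MvPolynomial.X 3]
      : Fin 4 → MvPolynomial (Fin 4) ℂ) b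
    = ∑ a : ZMod 4, C (chiZ4 (b * a)) * (X (a : Fin 4) : MvPolynomial (Fin 4) ℂ) := by
  have h0 : chiZ4 0 = 1 := chiZ4_zero
  have h1 : chiZ4 1 = Complex.I := by
    show Complex.I ^ 1 = _
    simp
  have h2 : chiZ4 2 = -1 := by
    show Complex.I ^ 2 = _
    simp
  have h3 : chiZ4 3 = -Complex.I := by
    show Complex.I ^ 3 = _
    simp
  have e0 : ∀ f : ZMod 4 → MvPolynomial (Fin 4) ℂ, ∑ a : ZMod 4, f a
      = f 0 + f 1 + f 2 + f 3 :=
    fun f => Fin.sum_univ_four f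
  have e : ∑ a : ZMod 4, C (chiZ4 (b * a)) * (X (a : Fin 4) : MvPolynomial (Fin 4) ℂ)
      = C (chiZ4 (b * 0)) * X 0 + C (chiZ4 (b * 1)) * X 1 + C (chiZ4 (b * 2)) * X 2
        + C (chiZ4 (b * 3)) * X 3 :=
    e0 (fun a : ZMod 4 => C (chiZ4 (b * a)) * (X (a : Fin 4) : MvPolynomial (Fin 4) ℂ))
  rw [e]
  have hb : b = 0 ∨ b = 1 ∨ b = 2 ∨ b = 3 := by
    have h : ∀ c : Fin 4, c = 0 ∨ c = 1 ∨ c = 2 ∨ c = 3 := by decide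
    exact h b
  have m22 : (2 * 2 : ZMod 4) = 0 := rfl
  have m23 : (2 * 3 : ZMod 4) = 2 := rfl
  have m32 : (3 * 2 : ZMod 4) = 2 := rfl
  have m33 : (3 * 3 : ZMod 4) = 1 := rfl
  rcases hb with rfl | rfl | rfl | rfl
  · simp only [mul_zero, zero_mul, h0]
    refine Eq.trans (b := X 0 + X 1 + X 2 + X 3) rfl ?_
    simp
  · simp only [mul_zero, one_mul, h0, h1, h2, h3]
    refine Eq.trans (b := X 0 + C Complex.I * X 1 - X 2 - C Complex.I * X 3) rfl ?_
    simp
    ring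
  · simp only [mul_zero, mul_one, m22, m23, h0, h2]
    refine Eq.trans (b := X 0 - X 1 + X 2 - X 3) rfl ?_
    simp
    ring
  · simp only [mul_zero, mul_one, m32, m33, h0, h1, h2, h3]
    refine Eq.trans (b := X 0 - C Complex.I * X 1 - X 2 + C Complex.I * X 3) rfl ?_
    simp
    ring

/-- MacWilliams theorem for the complete weight enumerator over `ℤ/4`:
`cwe_{C⊥}(s,t,u,v) = |C|⁻¹ cwe_C(s+t+u+v, s+it-u-iv, s-t+u-v, s-it-u+iv)`. -/
theorem macwilliams_cwe_z4 (n : ℕ) (hn : 1 ≤ n)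
    (Cd : Finset (Fin n → ZMod 4))
    (hC0 : (0 : Fin n → ZMod 4) ∈ Cd)
    (hCsub : ∀ x ∈ Cd, ∀ y ∈ Cd, x - y ∈ Cd) :
    cwe n (dualZ4Code n Cd)
      = (Cd.card : ℂ)⁻¹ •
          MvPolynomial.aeval
            ![MvPolynomial.X 0 + MvPolynomial.X 1 + MvPolynomial.X 2 + MvPolynomial.X 3,
              MvPolynomial.X 0 + MvPolynomial.C Complex.I * MvPolynomial.X 1
                - MvPolynomial.X 2 - MvPolynomial.C Complex.I * MvPolynomial.X 3,
              MvPolynomial.X 0 - MvPolynomial.X 1 + MvPolynomial.X 2 - MvPolynomial.X 3,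
              MvPolynomial.X 0 - MvPolynomial.C Complex.I * MvPolynomial.X 1
                - MvPolynomial.X 2 + MvPolynomial.C Complex.I * MvPolynomial.X 3]
            (cwe n Cd) := by
  unfold cwe
  rw [map_sum]
  simp only [map_prod, map_pow, aeval_X]
  simp only [prod_countCoord]
  simp only [subst_eq_sum]
  simp only [Finset.prod_univ_sum, Fintype.piFinset_univ, prod_mul_distrib]
  rw [sum_comm]
  have hs : ∀ y : Fin n → ZMod 4,
      ∑ x ∈ Cd, (∏ j, C (chiZ4 (x j * y j))) * ∏ j, (X (y j : Fin 4) : MvPolynomial (Fin 4) ℂ)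
      = if y ∈ dualZ4Code n Cd then (Cd.card : ℂ) • ∏ j, (X (y j : Fin 4) : MvPolynomial (Fin 4) ℂ)
        else 0 := by
    intro y
    rw [← sum_mul]
    simp only [← map_prod, ← chiZ4_sum]
    rw [← map_sum, sum_chiZ4 n Cd hC0 hCsub]
    split_ifs
    · rw [MvPolynomial.smul_eq_C_mul]
    · simp
  rw [sum_congr rfl (fun y _ => hs y), sum_ite_mem, univ_inter, ← smul_sum, smul_smul,
    inv_mul_cancel₀, one_smul]
  exact_mod_cast (card_pos.2 ⟨_, hC0⟩).ne'
end

section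
/- (Klemm; MacWilliams theorem for the symmetrized weight enumerator over ℤ/4.) Let n ≥ 1 and let C be a subgroup of (ℤ/4)^n. Then, as polynomials, swe_{C⊥}(s,t,u) = (1/|C|)·swe_C(s+2t+u, s−u, s−2t+u). -/
open Finset MvPolynomial

/-- The symmetrized weight enumerator
`swe_C(s,t,u) = Σ_{x ∈ C} s^{n₀} t^{n₁+n₃} u^{n₂}`, in the variables `X 0, X 1, X 2`. -/
noncomputable def swe (n : ℕ) (Cd : Finset (Fin n → ZMod 4)) : MvPolynomial (Fin 3) ℂ :=
  ∑ x ∈ Cd,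
    MvPolynomial.X 0 ^ countCoord n x 0 *
      MvPolynomial.X 1 ^ (countCoord n x 1 + countCoord n x 3) *
        MvPolynomial.X 2 ^ countCoord n x 2

noncomputable def chi4 (a : ZMod 4) : ℂ := Complex.I ^ a.val

lemma chi4_add (a b : ZMod 4) : chi4 (a + b) = chi4 a * chi4 b := by
  unfold chi4
  rw [← pow_add, ZMod.val_add, ← Complex.I_pow_eq_pow_mod]

lemma chi4_zero : chi4 0 = 1 := by simp [chi4]

lemma chi4_eq_one (a : ZMod 4) (h : chi4 a = 1) : a = 0 := by
  unfold chi4 at h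
  have h2 : (a.val) < 4 := ZMod.val_lt a
  have : a.val = 0 := by
    generalize a.val = k at *
    interval_cases k
    · rfl
    · have := congrArg Complex.re h
      norm_num at this
    · norm_num at h
    · rw [Complex.I_pow_three] at h
      have := congrArg Complex.re h
      norm_num at this
  exact (ZMod.val_eq_zero a).1 this

lemma chi4_sum {ι : Type*} (s : Finset ι) (f : ι → ZMod 4) :
    chi4 (∑ j ∈ s, f j) = ∏ j ∈ s, chi4 (f j) := by
  classical
  induction s using Finset.induction_on with
  | empty => simp [chi4_zero]
  | insert a s ha ih => rw [Finset.sum_insert ha, Finset.prod_insert ha, chi4_add, ih]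

lemma monomial_prod {R : Type*} [CommRing R] (n : ℕ) (s t u : R) (x : Fin n → ZMod 4) :
    s ^ countCoord n x 0 * t ^ (countCoord n x 1 + countCoord n x 3) * u ^ countCoord n x 2
      = ∏ j, (![s, t, u, t] : Fin 4 → R) (x j) := by
  have h := Finset.prod_fiberwise (Finset.univ : Finset (Fin n)) x
    (fun j => (![s, t, u, t] : Fin 4 → R) (x j))
  rw [← h]
  have h2 : ∀ a : ZMod 4, ∏ j ∈ Finset.univ.filter (fun j => x j = a),
      (![s, t, u, t] : Fin 4 → R) (x j)
      = (![s, t, u, t] : Fin 4 → R) a ^ (Finset.univ.filter (fun j => x j = a)).card := by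
    intro a
    apply Finset.prod_eq_pow_card
    intro j hj
    rw [(Finset.mem_filter.1 hj).2]
  simp_rw [h2]
  have h3 : ∀ g : ZMod 4 → R, ∏ a, g a = g 0 * g 1 * g 2 * g 3 := fun g => Fin.prod_univ_four g
  rw [h3]
  have e0 : (![s, t, u, t] : Fin 4 → R) (0 : ZMod 4) = s := rfl
  have e1 : (![s, t, u, t] : Fin 4 → R) (1 : ZMod 4) = t := rfl
  have e2 : (![s, t, u, t] : Fin 4 → R) (2 : ZMod 4) = u := rfl
  have e3 : (![s, t, u, t] : Fin 4 → R) (3 : ZMod 4) = t := rfl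
  rw [e0, e1, e2, e3]
  simp only [countCoord, Nat.cast_zero, Nat.cast_one, Nat.cast_ofNat]
  ring

lemma hat4 (s t u : MvPolynomial (Fin 3) ℂ) (a : ZMod 4) :
    (![s + MvPolynomial.C 2 * t + u, s - u, s - MvPolynomial.C 2 * t + u, s - u] :
      Fin 4 → MvPolynomial (Fin 3) ℂ) a
    = ∑ b : ZMod 4, MvPolynomial.C (chi4 (a * b)) *
        (![s, t, u, t] : Fin 4 → MvPolynomial (Fin 3) ℂ) b := by
  have h3 : ∀ g : ZMod 4 → MvPolynomial (Fin 3) ℂ, ∑ a, g a = g 0 + g 1 + g 2 + g 3 :=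
    fun g => Fin.sum_univ_four g
  rw [h3]
  have c0 : chi4 0 = 1 := chi4_zero
  have c1 : chi4 1 = Complex.I := by
    change Complex.I ^ 1 = _
    simp
  have c2 : chi4 2 = -1 := by
    change Complex.I ^ 2 = _
    simp
  have c3 : chi4 3 = -Complex.I := by
    change Complex.I ^ 3 = _
    simp
  have e0 : (![s, t, u, t] : Fin 4 → _) (0 : ZMod 4) = s := rfl
  have e1 : (![s, t, u, t] : Fin 4 → _) (1 : ZMod 4) = t := rfl
  have e2 : (![s, t, u, t] : Fin 4 → _) (2 : ZMod 4) = u := rfl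
  have e3 : (![s, t, u, t] : Fin 4 → _) (3 : ZMod 4) = t := rfl
  have hC2 : (MvPolynomial.C 2 : MvPolynomial (Fin 3) ℂ) = 2 := map_ofNat MvPolynomial.C 2
  rw [e0, e1, e2, e3, hC2]
  have ha : a = 0 ∨ a = 1 ∨ a = 2 ∨ a = 3 := by revert a; decide
  rcases ha with rfl | rfl | rfl | rfl
  · change s + 2 * t + u = _
    simp only [zero_mul, c0, map_one]
    ring
  · change s - u = _
    simp only [one_mul, c0, c1, c2, c3, map_one, map_neg]
    ring
  · change s - 2 * t + u = _
    rw [show (2 * 0 : ZMod 4) = 0 by decide, show (2 * 1 : ZMod 4) = 2 by decide,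
      show (2 * 2 : ZMod 4) = 0 by decide, show (2 * 3 : ZMod 4) = 2 by decide]
    simp only [c0, c2, map_one, map_neg]
    ring
  · change s - u = _
    rw [show (3 * 0 : ZMod 4) = 0 by decide, show (3 * 1 : ZMod 4) = 3 by decide,
      show (3 * 2 : ZMod 4) = 2 by decide, show (3 * 3 : ZMod 4) = 1 by decide]
    simp only [c0, c1, c2, c3, map_one, map_neg]
    ring

lemma char_sum (n : ℕ) (Cd : Finset (Fin n → ZMod 4))
    (hC0 : (0 : Fin n → ZMod 4) ∈ Cd)
    (hCsub : ∀ x ∈ Cd, ∀ y ∈ Cd, x - y ∈ Cd) (y : Fin n → ZMod 4) :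
    ∑ x ∈ Cd, chi4 (∑ j, x j * y j) = if y ∈ dualZ4Code n Cd then (Cd.card : ℂ) else 0 := by
  split_ifs with h
  · have h' := (Finset.mem_filter.1 h).2
    rw [Finset.sum_congr rfl (fun x hx => by rw [h' x hx, chi4_zero])]
    simp
  · have h' : ∃ z ∈ Cd, ∑ j, z j * y j ≠ 0 := by
      by_contra! hc
      exact h (Finset.mem_filter.2 ⟨Finset.mem_univ _, hc⟩)
    obtain ⟨z, hz, hzy⟩ := h'
    have hadd : ∀ x ∈ Cd, x + z ∈ Cd := fun x hx => by
      have := hCsub x hx (0 - z) (hCsub 0 hC0 z hz)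
      simpa using this
    have key : ∑ x ∈ Cd, chi4 (∑ j, x j * y j)
        = (∑ x ∈ Cd, chi4 (∑ j, x j * y j)) * chi4 (∑ j, z j * y j) := by
      rw [Finset.sum_mul]
      refine Finset.sum_bij' (fun x _ => x - z) (fun x _ => x + z)
        (fun x hx => hCsub x hx z hz) hadd (by simp) (by simp) ?_
      intro x hx
      rw [← chi4_add, ← Finset.sum_add_distrib]
      congr 1
      apply Finset.sum_congr rfl
      intro j _
      simp only [Pi.sub_apply]
      ring
    by_contra hne
    exact hzy (chi4_eq_one _ (mul_left_cancel₀ hne (by rw [← key, mul_one])))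

/-- Klemm; MacWilliams theorem for the symmetrized weight enumerator
over `ℤ/4`: `swe_{C⊥}(s,t,u) = |C|⁻¹ swe_C(s+2t+u, s-u, s-2t+u)`. -/
theorem macwilliams_swe_z4 (n : ℕ) (hn : 1 ≤ n)
    (Cd : Finset (Fin n → ZMod 4))
    (hC0 : (0 : Fin n → ZMod 4) ∈ Cd)
    (hCsub : ∀ x ∈ Cd, ∀ y ∈ Cd, x - y ∈ Cd) :
    swe n (dualZ4Code n Cd)
      = (Cd.card : ℂ)⁻¹ •
          MvPolynomial.aeval
            ![MvPolynomial.X 0 + MvPolynomial.C 2 * MvPolynomial.X 1 + MvPolynomial.X 2,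
              MvPolynomial.X 0 - MvPolynomial.X 2,
              MvPolynomial.X 0 - MvPolynomial.C 2 * MvPolynomial.X 1 + MvPolynomial.X 2]
            (swe n Cd) := by
  have hcard : (Cd.card : ℂ) ≠ 0 := by
    exact_mod_cast (Finset.card_pos.2 ⟨0, hC0⟩).ne'
  rw [eq_inv_smul_iff₀ hcard]
  unfold swe
  simp only [map_sum, map_mul, map_pow, MvPolynomial.aeval_X, Matrix.cons_val_zero,
    Matrix.cons_val_one, Matrix.cons_val]
  simp only [monomial_prod, hat4, Finset.prod_univ_sum, Fintype.piFinset_univ,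
    Finset.prod_mul_distrib, ← map_prod, ← chi4_sum]
  rw [Finset.sum_comm]
  simp only [← Finset.sum_mul, ← map_sum, char_sum n Cd hC0 hCsub]
  rw [Finset.smul_sum, ← Finset.sum_subset (Finset.subset_univ (dualZ4Code n Cd))]
  · apply Finset.sum_congr rfl
    intro y hy
    rw [if_pos hy, MvPolynomial.smul_eq_C_mul]
  · intro y _ hy
    rw [if_neg hy]
    simp
end

section
/- (MacWilliams identity for the Lee weight enumerator over ℤ/4.) Let n ≥ 1 and let C be a subgroup of (ℤ/4)^n. Then, as polynomials in two variables s, t, swe_{C⊥}(s², s·t, t²) = (1/|C|)·swe_C((s+t)², s² − t², (s−t)²); i.e., the Lee weight enumerators of C and C⊥ satisfy the binary MacWilliams transform even when C is not linear as a binary code. -/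
open Finset MvPolynomial

/-- the additive character with polynomial values -/
noncomputable def psiZ4 : AddChar (ZMod 4) (MvPolynomial (Fin 2) ℂ) :=
  AddChar.zmodChar 4 (ζ := (MvPolynomial.C Complex.I : MvPolynomial (Fin 2) ℂ))
    (by rw [← map_pow, Complex.I_pow_four, map_one])

theorem psiZ4_apply (a : ZMod 4) : psiZ4 a = MvPolynomial.C (Complex.I ^ a.val) := by
  rw [map_pow]; rfl

theorem psiZ4_eq_one (a : ZMod 4) (h : psiZ4 a = 1) : a = 0 := by
  rw [psiZ4_apply, ← map_one (MvPolynomial.C), (MvPolynomial.C_injective _ _).eq_iff] at h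
  fin_cases a
  · rfl
  · exfalso
    have : Complex.I ^ 1 = 1 := h
    simp [Complex.ext_iff] at this
  · exfalso
    have : Complex.I ^ 2 = 1 := h
    norm_num [Complex.ext_iff] at this
  · exfalso
    have : Complex.I ^ 3 = 1 := h
    simp [Complex.ext_iff, pow_succ] at this

/-- coordinate weight -/
noncomputable def wtZ4 (v : Fin 3 → MvPolynomial (Fin 2) ℂ) (a : ZMod 4) :
    MvPolynomial (Fin 2) ℂ :=
  (if a = ((0 : ℕ) : ZMod 4) then v 0 else 1) *
    ((if a = ((1 : ℕ) : ZMod 4) then v 1 else 1) * (if a = ((3 : ℕ) : ZMod 4) then v 1 else 1)) *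
      (if a = ((2 : ℕ) : ZMod 4) then v 2 else 1)

theorem aeval_sweZ4 (n : ℕ) (D : Finset (Fin n → ZMod 4)) (v : Fin 3 → MvPolynomial (Fin 2) ℂ) :
    MvPolynomial.aeval v (swe n D) = ∑ x ∈ D, ∏ j, wtZ4 v (x j) := by
  simp only [swe, map_sum, map_mul, map_pow, MvPolynomial.aeval_X]
  refine Finset.sum_congr rfl fun x _ => ?_
  simp only [wtZ4, Finset.prod_mul_distrib, countCoord, pow_add, Finset.prod_ite,
    Finset.prod_const, one_pow, mul_one]

theorem sum_zmod4 {M : Type*} [AddCommMonoid M] (f : ZMod 4 → M) :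
    ∑ a, f a = f 0 + f 1 + f 2 + f 3 := Fin.sum_univ_four f

theorem wtZ4_zero (v : Fin 3 → MvPolynomial (Fin 2) ℂ) : wtZ4 v 0 = v 0 := by
  have h1 : (0 : ZMod 4) ≠ ((1 : ℕ) : ZMod 4) := by decide
  have h2 : (0 : ZMod 4) ≠ ((2 : ℕ) : ZMod 4) := by decide
  have h3 : (0 : ZMod 4) ≠ ((3 : ℕ) : ZMod 4) := by decide
  rw [wtZ4, if_pos (by decide), if_neg h1, if_neg h2, if_neg h3]; simp

theorem wtZ4_one (v : Fin 3 → MvPolynomial (Fin 2) ℂ) : wtZ4 v 1 = v 1 := by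
  rw [wtZ4, if_neg (by decide), if_pos (by decide), if_neg (by decide), if_neg (by decide)]; simp

theorem wtZ4_two (v : Fin 3 → MvPolynomial (Fin 2) ℂ) : wtZ4 v 2 = v 2 := by
  rw [wtZ4, if_neg (by decide), if_neg (by decide), if_neg (by decide), if_pos (by decide)]; simp

theorem wtZ4_three (v : Fin 3 → MvPolynomial (Fin 2) ℂ) : wtZ4 v 3 = v 1 := by
  rw [wtZ4, if_neg (by decide), if_neg (by decide), if_pos (by decide), if_neg (by decide)]; simp

theorem psiZ4_zero : psiZ4 0 = 1 := AddChar.map_zero_eq_one _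
theorem psiZ4_one : psiZ4 1 = MvPolynomial.C Complex.I := by
  rw [psiZ4_apply, show (1 : ZMod 4).val = 1 from rfl, pow_one]
theorem psiZ4_two : psiZ4 2 = -1 := by
  rw [psiZ4_apply, show (2 : ZMod 4).val = 2 from rfl, Complex.I_sq]; simp
theorem psiZ4_three : psiZ4 3 = -MvPolynomial.C Complex.I := by
  rw [psiZ4_apply, show (3 : ZMod 4).val = 3 from rfl, Complex.I_pow_three]; simp

theorem wtZ4_transform (b : ZMod 4) :
    ∑ a, psiZ4 (b * a) * wtZ4 ![(MvPolynomial.X 0 : MvPolynomial (Fin 2) ℂ) ^ 2,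
      MvPolynomial.X 0 * MvPolynomial.X 1, MvPolynomial.X 1 ^ 2] a =
    wtZ4 ![((MvPolynomial.X 0 : MvPolynomial (Fin 2) ℂ) + MvPolynomial.X 1) ^ 2,
              MvPolynomial.X 0 ^ 2 - MvPolynomial.X 1 ^ 2,
              (MvPolynomial.X 0 - MvPolynomial.X 1) ^ 2] b := by
  rw [sum_zmod4, wtZ4_zero, wtZ4_one, wtZ4_two, wtZ4_three]
  have hb : b = 0 ∨ b = 1 ∨ b = 2 ∨ b = 3 := by revert b; decide
  rcases hb with rfl | rfl | rfl | rfl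
  · simp only [zero_mul, psiZ4_zero, wtZ4_zero]
    simp; ring
  · simp only [mul_zero, one_mul, psiZ4_zero, psiZ4_one, psiZ4_two, psiZ4_three, wtZ4_one]
    simp; ring
  · rw [show (2 : ZMod 4) * 0 = 0 by decide, show (2 : ZMod 4) * 1 = 2 by decide,
      show (2 : ZMod 4) * 2 = 0 by decide, show (2 : ZMod 4) * 3 = 2 by decide]
    simp only [psiZ4_zero, psiZ4_two, wtZ4_two]
    simp; ring
  · rw [show (3 : ZMod 4) * 0 = 0 by decide, show (3 : ZMod 4) * 1 = 3 by decide,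
      show (3 : ZMod 4) * 2 = 2 by decide, show (3 : ZMod 4) * 3 = 1 by decide]
    simp only [psiZ4_zero, psiZ4_one, psiZ4_two, psiZ4_three, wtZ4_three]
    simp; ring

theorem orthZ4 (n : ℕ) (Cd : Finset (Fin n → ZMod 4))
    (hC0 : (0 : Fin n → ZMod 4) ∈ Cd)
    (hCsub : ∀ x ∈ Cd, ∀ y ∈ Cd, x - y ∈ Cd) (y : Fin n → ZMod 4) :
    ∑ x ∈ Cd, psiZ4 (∑ j, x j * y j) =
      if y ∈ dualZ4Code n Cd then (Cd.card : MvPolynomial (Fin 2) ℂ) else 0 := by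
  split_ifs with h
  · simp only [dualZ4Code, Finset.mem_filter, Finset.mem_univ, true_and] at h
    rw [Finset.sum_congr rfl fun x hx => by rw [h x hx, psiZ4_zero]]
    simp
  · simp only [dualZ4Code, Finset.mem_filter, Finset.mem_univ, true_and, not_forall] at h
    obtain ⟨z, hz, hzy⟩ := h
    have hadd : ∀ x ∈ Cd, x + z ∈ Cd := fun x hx => by
      have := hCsub x hx _ (hCsub 0 hC0 z hz)
      simpa using this
    have key : ∑ x ∈ Cd, psiZ4 (∑ j, x j * y j) =
        psiZ4 (∑ j, z j * y j) * ∑ x ∈ Cd, psiZ4 (∑ j, x j * y j) := by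
      rw [Finset.mul_sum]
      refine Finset.sum_bij' (fun x _ => x - z) (fun x _ => x + z)
        (fun x hx => hCsub x hx z hz) hadd (by simp) (by simp) fun x hx => ?_
      rw [← AddChar.map_add_eq_mul, ← Finset.sum_add_distrib]
      congr 1
      refine Finset.sum_congr rfl fun j _ => ?_
      simp only [Pi.sub_apply]; ring
    by_contra hne
    exact hzy (psiZ4_eq_one _ (mul_right_cancel₀ hne (by rw [one_mul]; exact key.symm)))

/-- MacWilliams identity for the Lee weight enumerator over `ℤ/4`:
`swe_{C⊥}(s², st, t²) = |C|⁻¹ swe_C((s+t)², s²-t², (s-t)²)`, i.e. the Lee weight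
enumerators of `C` and `C⊥` satisfy the binary MacWilliams transform. -/
theorem macwilliams_lee_z4 (n : ℕ) (hn : 1 ≤ n)
    (Cd : Finset (Fin n → ZMod 4))
    (hC0 : (0 : Fin n → ZMod 4) ∈ Cd)
    (hCsub : ∀ x ∈ Cd, ∀ y ∈ Cd, x - y ∈ Cd) :
    MvPolynomial.aeval
        ![(MvPolynomial.X 0 : MvPolynomial (Fin 2) ℂ) ^ 2, MvPolynomial.X 0 * MvPolynomial.X 1, MvPolynomial.X 1 ^ 2]
        (swe n (dualZ4Code n Cd))
      = (Cd.card : ℂ)⁻¹ •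
          MvPolynomial.aeval
            ![((MvPolynomial.X 0 : MvPolynomial (Fin 2) ℂ) + MvPolynomial.X 1) ^ 2,
              MvPolynomial.X 0 ^ 2 - MvPolynomial.X 1 ^ 2,
              (MvPolynomial.X 0 - MvPolynomial.X 1) ^ 2]
            (swe n Cd) := by
  rw [aeval_sweZ4, aeval_sweZ4]
  have hcard : (Cd.card : ℂ) ≠ 0 := by
    exact_mod_cast Finset.card_ne_zero_of_mem hC0
  rw [eq_inv_smul_iff₀ hcard]
  simp_rw [← wtZ4_transform, Finset.prod_univ_sum, Fintype.piFinset_univ, Finset.prod_mul_distrib]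
  rw [Finset.sum_comm]
  have hp : ∀ x y : Fin n → ZMod 4, ∏ j, psiZ4 (x j * y j) = psiZ4 (∑ j, x j * y j) :=
    fun x y => (map_prod psiZ4.toMonoidHom (fun j => Multiplicative.ofAdd (x j * y j)) Finset.univ).symm
  simp_rw [hp, ← Finset.sum_mul, orthZ4 n Cd hC0 hCsub, ite_mul, zero_mul]
  rw [Finset.sum_ite_mem, Finset.univ_inter, ← Finset.mul_sum, Nat.cast_smul_eq_nsmul,
    nsmul_eq_mul]
end

section
/- (Modular invariance is inherited by symmetric powers.) Let d ≥ 0, n ≥ 1, let P be a (d+1)×(d+1) complex matrix, T a diagonal (d+1)×(d+1) complex matrix, and c ∈ ℂ with (P·T)³ = c·I. For a (d+1)×(d+1) matrix M, let M̂ be the matrix with rows and columns indexed by vectors α of d+1 nonnegative integers summing to n, whose (β,α)-entry is the coefficient of s^α in (Ms)^β = Π_{j=0}^{d} (Σ_{i=0}^{d} M_{j,i}·s_i)^{β(j)}. Then T̂ is diagonal and (P̂·T̂)³ = c^n·I. -/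
open Matrix Finset MvPolynomial

/-- `M̂`: the matrix of the induced action of `M` on homogeneous polynomials of degree `n`
in `s_0, …, s_d`; its `(β,α)`-entry is the coefficient of `s^α` in `(Ms)^β`. -/
noncomputable def hatMat (d n : ℕ) (M : Matrix (Fin (d + 1)) (Fin (d + 1)) ℂ) :
    Matrix {α : Fin (d + 1) → ℕ // α ∈ Finset.Nat.antidiagonalTuple (d + 1) n}
      {α : Fin (d + 1) → ℕ // α ∈ Finset.Nat.antidiagonalTuple (d + 1) n} ℂ :=
  Matrix.of fun β α =>
    MvPolynomial.coeff (Finsupp.equivFunOnFinite.symm α.1)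
      (∏ j : Fin (d + 1),
        (∑ i : Fin (d + 1), MvPolynomial.C (M j i) * MvPolynomial.X i) ^ β.1 j)

noncomputable def linForm (d : ℕ) (M : Matrix (Fin (d + 1)) (Fin (d + 1)) ℂ)
    (β : Fin (d + 1) → ℕ) : MvPolynomial (Fin (d + 1)) ℂ :=
  ∏ j : Fin (d + 1), (∑ i : Fin (d + 1), MvPolynomial.C (M j i) * MvPolynomial.X i) ^ β j

theorem hatMat_eq_coeff (d n : ℕ) (M : Matrix (Fin (d + 1)) (Fin (d + 1)) ℂ) (β α) :
    hatMat d n M β α =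
      MvPolynomial.coeff (Finsupp.equivFunOnFinite.symm α.1) (linForm d M β.1) := rfl

theorem linForm_homog (d n : ℕ) (M : Matrix (Fin (d + 1)) (Fin (d + 1)) ℂ)
    (β : Fin (d + 1) → ℕ) (hβ : β ∈ Finset.Nat.antidiagonalTuple (d + 1) n) :
    (linForm d M β).IsHomogeneous n := by
  rw [Finset.Nat.mem_antidiagonalTuple] at hβ
  rw [← hβ]
  unfold linForm
  apply MvPolynomial.IsHomogeneous.prod
  intro j _
  have h : (∑ i : Fin (d + 1), MvPolynomial.C (M j i) * MvPolynomial.X i :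
      MvPolynomial (Fin (d + 1)) ℂ).IsHomogeneous 1 := by
    apply MvPolynomial.IsHomogeneous.sum
    intro i _
    simpa using (MvPolynomial.isHomogeneous_C _ (M j i)).mul (MvPolynomial.isHomogeneous_X ℂ i)
  simpa using h.pow (β j)

theorem homog_expand (d n : ℕ) (p : MvPolynomial (Fin (d + 1)) ℂ) (hp : p.IsHomogeneous n) :
    p = ∑ α : {α : Fin (d + 1) → ℕ // α ∈ Finset.Nat.antidiagonalTuple (d + 1) n},
      MvPolynomial.monomial (Finsupp.equivFunOnFinite.symm α.1)
        (MvPolynomial.coeff (Finsupp.equivFunOnFinite.symm α.1) p) := by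
  ext m
  rw [MvPolynomial.coeff_sum]
  simp only [MvPolynomial.coeff_monomial]
  by_cases hm : (m : Fin (d + 1) → ℕ) ∈ Finset.Nat.antidiagonalTuple (d + 1) n
  · rw [Finset.sum_eq_single ⟨m, hm⟩]
    · simp
    · intro b _ hb
      rw [if_neg]
      rintro rfl
      exact hb (Subtype.ext (by simp))
    · simp
  · have h0 : MvPolynomial.coeff m p = 0 := by
      apply hp.coeff_eq_zero
      intro h
      apply hm
      rw [Finset.Nat.mem_antidiagonalTuple, ← h, Finsupp.degree_eq_sum]
    rw [h0, Finset.sum_eq_zero]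
    intro b _
    split_ifs with hb
    · rw [hb, h0]
    · rfl

theorem linForm_mul (d : ℕ) (M N : Matrix (Fin (d + 1)) (Fin (d + 1)) ℂ)
    (β : Fin (d + 1) → ℕ) :
    linForm d (M * N) β = MvPolynomial.aeval
      (fun i => ∑ k : Fin (d + 1), MvPolynomial.C (N i k) * MvPolynomial.X k :
        Fin (d + 1) → MvPolynomial (Fin (d + 1)) ℂ) (linForm d M β) := by
  unfold linForm
  rw [map_prod]
  refine Finset.prod_congr rfl fun j _ => ?_
  rw [map_pow, map_sum]
  congr 1
  simp only [map_mul, MvPolynomial.aeval_X, MvPolynomial.algHom_C, Matrix.mul_apply, map_sum,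
    Finset.sum_mul, Finset.mul_sum, MvPolynomial.algebraMap_eq]
  rw [Finset.sum_comm]
  simp only [mul_assoc]

theorem hatMat_mul (d n : ℕ) (M N : Matrix (Fin (d + 1)) (Fin (d + 1)) ℂ) :
    hatMat d n (M * N) = hatMat d n M * hatMat d n N := by
  ext β α
  rw [Matrix.mul_apply, hatMat_eq_coeff, linForm_mul,
    homog_expand d n _ (linForm_homog d n M β.1 β.2), map_sum, MvPolynomial.coeff_sum]
  refine Finset.sum_congr rfl fun γ _ => ?_
  rw [MvPolynomial.aeval_monomial, MvPolynomial.algebraMap_eq, MvPolynomial.coeff_C_mul,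
    Finsupp.prod_fintype _ _ (by simp)]
  rfl

theorem hatMat_diagonal (d n : ℕ) (t : Fin (d + 1) → ℂ) :
    hatMat d n (Matrix.diagonal t) = Matrix.diagonal fun β => ∏ j, t j ^ β.1 j := by
  ext β α
  have h : linForm d (Matrix.diagonal t) β.1 =
      MvPolynomial.monomial (Finsupp.equivFunOnFinite.symm β.1) (∏ j, t j ^ β.1 j) := by
    rw [MvPolynomial.monomial_eq, Finsupp.prod_fintype _ _ (by simp), map_prod,
      ← Finset.prod_mul_distrib]
    unfold linForm
    refine Finset.prod_congr rfl fun j _ => ?_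
    rw [Finset.sum_eq_single j]
    · simp [mul_pow]
    · intro b _ hb
      simp [Matrix.diagonal_apply_ne' _ hb]
    · simp
  rw [hatMat_eq_coeff, h, MvPolynomial.coeff_monomial, Matrix.diagonal_apply]
  simp only [EmbeddingLike.apply_eq_iff_eq, Subtype.ext_iff]

/-- modular invariance is inherited by symmetric powers:
if `T` is diagonal and `(PT)³ = cI`, then `T̂` is diagonal and `(P̂ T̂)³ = cⁿ I`. -/
theorem modular_invariance_hat (d n : ℕ) (hn : 1 ≤ n)
    (P T : Matrix (Fin (d + 1)) (Fin (d + 1)) ℂ) (c : ℂ)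
    (hT : T.IsDiag) (hPT : (P * T) ^ 3 = c • (1 : Matrix (Fin (d + 1)) (Fin (d + 1)) ℂ)) :
    (hatMat d n T).IsDiag ∧
      (hatMat d n P * hatMat d n T) ^ 3 = c ^ n • 1 := by
  constructor
  · rw [← hT.diagonal_diag, hatMat_diagonal]
    exact Matrix.isDiag_diagonal _
  · have h3 : (hatMat d n P * hatMat d n T) ^ 3 = hatMat d n ((P * T) ^ 3) := by
      simp only [pow_succ, pow_zero, one_mul, hatMat_mul]
    rw [h3, hPT, Matrix.smul_one_eq_diagonal, hatMat_diagonal, Matrix.smul_one_eq_diagonal]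
    congr 1
    funext β
    have hβ := β.2
    rw [Finset.Nat.mem_antidiagonalTuple] at hβ
    rw [Finset.prod_pow_eq_pow_sum, hβ]
end
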